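/- Let n > m, let 2 ≤ d ≤ m be an integer, let k := ⌊n(m−d+1)/ℓ⌋ (the maximal rank allowed by the Singleton bound ℓk ≤ max{m,n}(min{m,n}−d+1) for rank-metric codes over finite chain rings), θ := (d−1)(m−d+1) and r := ℓ·⌈n(d−1)/ℓ⌉ − n(d−1). Then, with limits taken over prime powers q → ∞: if θ − r < ℓ then lim_{q→∞} δ_q^{rk}(N,k,ℓ,d) = 1; if θ − r > ℓ then lim_{q→∞} δ_q^{rk}(N,k,ℓ,d) = 0; and if ℓ = θ − r then limsup_{q→∞} δ_q^{rk}(N,k,ℓ,d) ≤ 1/2. -/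

import Mathlib

/-!
Write `t = d - 1`, `M = n m / ℓ`, `Q = q ^ ℓ`, and let `K` be the residue field of `S̄`, with `Q`
elements. Free codes of rank `k` correspond to `S̄`-linearly independent `k`-tuples `T` of vectors in
`V = S ^ n` up to the action of `GL_k(S̄)` (`natCard_tuples`), and the product of the denominator of the
density with `|GL_k(S̄)|` is `|V| ^ k π`, where `π = ∏_{i<k} (1 - Q ^ i / Q ^ M)` tends to `1`
(`natCard_GL`, `NN_mul_eq`). So the density is, up to `π`, the probability that a uniformly random tuple
is good, that is, independent and spanning a code of minimum distance at least `d`.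

Every nonzero vector can be multiplied into the socle `γ ^ (s - 1) V` without increasing its rank.
Therefore `T` is good if and only if `γ ^ (s - 1) T(a_P)` has rank at least `d` for each point `P` of the
projective space of `K ^ k`, where `a_P` is a fixed lift of `P` to `S̄ ^ k` (`good_iff`). For random `T`
the vectors `T(a_P)` are uniform and pairwise independent (`good_count`). If `p` is the probability that
a random vector violates the condition and `E = |ℙ(K ^ k)| p`, then the union bound and the second
moment method give `1 - E ≤ P(good) ≤ 1 / (1 + E)` (`card_avoid_bounds`).

On the socle the rank is an ordinary matrix rank, so `p` is the proportion of `n × m` matrices over the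
field with `q` elements having rank at most `t` (`mu_le_iff`, `natCard_lowRank`). Elementary bounds for
their number (`lowRank_card_lower`, `lowRank_card_upper`) yield `ρ q ^ e ≤ E ≤ 2 * n.choose t * q ^ e`
with `ρ → 1` (`density_bounds`). For the maximal rank `k` one has `M - k = ⌈n t / ℓ⌉`, which turns the
exponent into `e = θ - r - ℓ`. The three cases are the three signs of `e` (`limit_cases`); when `e = 0`
the upper bound tends to `1 / 2`.
-/

open Filter Topology

noncomputable def NN (s q : ℕ) (n k : ℤ) : ℝ :=
  if k < 0 then 0 else
    (q : ℝ) ^ (k * (n - k) * ((s : ℤ) - 1)) *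
      ∏ i ∈ Finset.Icc 1 k.toNat, ((q : ℝ) ^ (n - (i : ℤ) + 1) - 1) / ((q : ℝ) ^ (i : ℤ) - 1)

noncomputable def mu (A : Type*) [Semiring A] {M : Type*} [AddCommMonoid M] [Module A M]
    (C : Submodule A M) : ℕ :=
  sInf {k : ℕ | ∃ f : Fin k → M, Submodule.span A (Set.range f) = C}

noncomputable def minDist {M : Type*} (D : M → M → ℝ) (C : Set M) : ℝ :=
  sInf {r : ℝ | ∃ x ∈ C, ∃ y ∈ C, x ≠ y ∧ D x y = r}

def IsChainData (s q : ℕ) (R : Type*) [CommRing R] (γ : R) : Prop :=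
  (Ideal.span {γ}).IsMaximal ∧ (∀ x : R, ¬IsUnit x → x ∈ Ideal.span {γ}) ∧
    γ ^ s = 0 ∧ γ ^ (s - 1) ≠ 0 ∧ Nat.card (R ⧸ Ideal.span {γ}) = q

def IsGaloisExtData (m card : ℕ) (R : Type*) [CommRing R] (S : Type*) [CommRing S]
    [Algebra R S] (γ : R) : Prop :=
  Module.Free R S ∧ Module.finrank R S = m ∧
    (Ideal.span {algebraMap R S γ}).IsMaximal ∧
    (∀ x : S, ¬IsUnit x → x ∈ Ideal.span {algebraMap R S γ}) ∧
    Nat.card (S ⧸ Ideal.span {algebraMap R S γ}) = card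

def IsGoodDist {S : Type*} [CommRing S] {n : ℕ} (D : (Fin n → S) → (Fin n → S) → ℝ) : Prop :=
  (∀ x y, 0 ≤ D x y) ∧ (∀ x y, (D x y = 0 ↔ x = y)) ∧ (∀ x y, D x y = D y x) ∧
    (∀ x y z, D x z ≤ D x y + D y z) ∧ (∀ x y z, D (x + z) (y + z) = D x y) ∧
    (∀ (a : S) (x : Fin n → S), D (a • x) 0 ≤ D x 0)

noncomputable def volBall (R : Type*) [CommRing R] {S : Type*} [CommRing S] [Algebra R S]
    (γ : R) {n : ℕ} (D : (Fin n → S) → (Fin n → S) → ℝ) (d : ℕ) : ℕ :=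
  Nat.card {x : Fin n → S // (∃ i, x i ∉ Ideal.span {algebraMap R S γ}) ∧ D x 0 < (d : ℝ)}

noncomputable def volBallFull {S : Type*} [CommRing S] {n : ℕ} (D : (Fin n → S) → (Fin n → S) → ℝ)
    (d : ℕ) : ℕ :=
  Nat.card {x : Fin n → S // D x 0 < (d : ℝ)}

noncomputable def volBallGamma (R : Type*) [CommRing R] {S : Type*} [CommRing S] [Algebra R S]
    (γ : R) {n : ℕ} (D : (Fin n → S) → (Fin n → S) → ℝ) (d : ℕ) : ℕ :=
  Nat.card {x : Fin n → S // (∀ i, x i ∈ Ideal.span {algebraMap R S γ}) ∧ D x 0 < (d : ℝ)}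

noncomputable def numCodes {R S : Type*} [CommRing R] [CommRing S] [Algebra R S]
    (Sbar : Subalgebra R S) {n : ℕ} (D : (Fin n → S) → (Fin n → S) → ℝ) (k d : ℕ) : ℕ :=
  Nat.card {C : Submodule ↥Sbar (Fin n → S) //
    Module.Free ↥Sbar ↥C ∧ mu ↥Sbar C = k ∧ (d : ℝ) ≤ minDist D (C : Set (Fin n → S))}

noncomputable def numBadCodes {R S : Type*} [CommRing R] [CommRing S] [Algebra R S]
    (Sbar : Subalgebra R S) {n : ℕ} (D : (Fin n → S) → (Fin n → S) → ℝ) (k d : ℕ) : ℕ :=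
  Nat.card {C : Submodule ↥Sbar (Fin n → S) //
    Module.Free ↥Sbar ↥C ∧ mu ↥Sbar C = k ∧ minDist D (C : Set (Fin n → S)) ≤ (d : ℝ) - 1}

noncomputable def densityCodes (s q ℓ : ℕ) {R S : Type*} [CommRing R] [CommRing S]
    [Algebra R S] (Sbar : Subalgebra R S) {n : ℕ} (D : (Fin n → S) → (Fin n → S) → ℝ)
    (N k d : ℕ) : ℝ :=
  (numCodes Sbar D k d : ℝ) / NN s (q ^ ℓ) ((N / ℓ : ℕ) : ℤ) (k : ℤ)

noncomputable def hammingD {S : Type*} {n : ℕ} (x y : Fin n → S) : ℝ :=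
  Nat.card {i : Fin n // x i ≠ y i}

noncomputable def rankD (R : Type*) [CommRing R] {S : Type*} [CommRing S] [Algebra R S]
    {n : ℕ} (x y : Fin n → S) : ℝ :=
  (mu R (Submodule.span R (Set.range (x - y))) : ℝ)

/-! ### Counting tools and finite chain rings -/

/-- A surjective homomorphism of finite groups pushes the uniform distribution forward to the
uniform distribution: the event `P` has the same probability upstairs and downstairs. -/
theorem natCard_preimage_mul {G H : Type*} [AddCommGroup G] [AddCommGroup H] [Finite G] [Finite H]
    (f : G →+ H) (hf : Function.Surjective f) (P : H → Prop) :
    Nat.card {g : G // P (f g)} * Nat.card H = Nat.card {h : H // P h} * Nat.card G := by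
  choose σ hσ using hf
  -- the set-theoretic section `σ` splits `G` as a product of `H` and the kernel
  let e : G ≃ H × f.ker :=
    { toFun := fun g => (f g, ⟨g - σ (f g), by simp [AddMonoidHom.mem_ker, hσ]⟩)
      invFun := fun p => (p.2 : G) + σ p.1
      left_inv := fun g => by simp
      right_inv := fun p => by
        obtain ⟨h, k, hk⟩ := p
        rw [AddMonoidHom.mem_ker] at hk
        ext <;> simp [hσ, hk] }
  have e' : {g : G // P (f g)} ≃ {h : H // P h} × f.ker :=
    (e.subtypeEquiv (q := fun p => P p.1) (fun g => Iff.rfl)).trans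
      (Equiv.prodSubtypeFstEquivSubtypeProd (p := P))
  rw [Nat.card_congr e', Nat.card_congr e, Nat.card_prod, Nat.card_prod]
  ring

/-- Let `A i` be pairwise independent events of the same probability `p`, with expected number of
occurrences `E = |ι| p`. The probability that none occurs is at least `1 - E` by the union bound, and
at most `1 / (1 + E)`: Cauchy–Schwarz applied to the number of occurrences gives
`P(some A i) ≥ E ^ 2 / (E + E ^ 2)`. -/
theorem card_avoid_bounds {Ω ι : Type*} [Fintype Ω] [Fintype ι] [DecidableEq Ω]
    (A : ι → Finset Ω) (p : ℝ) (hp : 0 ≤ p)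
    (h1 : ∀ i, ((A i).card : ℝ) = p * Fintype.card Ω)
    (h2 : ∀ i j, i ≠ j → ((A i ∩ A j).card : ℝ) = p ^ 2 * Fintype.card Ω) :
    (1 - Fintype.card ι * p) * Fintype.card Ω ≤ (Nat.card {ω : Ω // ∀ i, ω ∉ A i} : ℝ) ∧
      (Nat.card {ω : Ω // ∀ i, ω ∉ A i} : ℝ) * (1 + Fintype.card ι * p) ≤ Fintype.card Ω := by
  classical
  set B : Finset Ω := Finset.univ.biUnion A with hB
  have hg : (Nat.card {ω : Ω // ∀ i, ω ∉ A i} : ℝ) = Fintype.card Ω - B.card := by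
    have : Nat.card {ω : Ω // ∀ i, ω ∉ A i} = Bᶜ.card := by
      rw [Nat.card_eq_fintype_card, Fintype.card_subtype]
      congr 1
      ext ω
      simp [hB]
    rw [this, Finset.card_compl, Nat.cast_sub (Finset.card_le_univ _)]
  rw [hg]
  set W : ℝ := (Fintype.card Ω : ℝ) with hW
  have hW0 : 0 ≤ W := by positivity
  set E : ℝ := (Fintype.card ι : ℝ) * p with hE
  have hE0 : 0 ≤ E := by positivity
  have hub : (B.card : ℝ) ≤ E * W := by
    have : (B.card : ℝ) ≤ ∑ i, ((A i).card : ℝ) := by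
      exact_mod_cast Finset.card_biUnion_le
    simp only [h1, Finset.sum_const, Finset.card_univ, nsmul_eq_mul] at this
    linarith
  refine ⟨by linarith, ?_⟩
  -- the number of events that occur
  let Y : Ω → ℝ := fun ω => ∑ i, if ω ∈ A i then 1 else 0
  have hsum : ∑ ω ∈ B, Y ω = E * W := by
    have : ∑ ω ∈ B, Y ω = ∑ ω, Y ω := by
      apply Finset.sum_subset (Finset.subset_univ _)
      intro ω _ hω
      have : ∀ i, ω ∉ A i := by simpa [hB] using hω
      simp [Y, this]
    rw [this, Finset.sum_comm]
    simp [h1, hE, mul_assoc]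
  have hsq : ∑ ω ∈ B, Y ω ^ 2 ≤ (E + E ^ 2) * W := by
    have : ∑ ω ∈ B, Y ω ^ 2 ≤ ∑ ω, Y ω ^ 2 :=
      Finset.sum_le_sum_of_subset_of_nonneg (Finset.subset_univ _) (fun _ _ _ => sq_nonneg _)
    refine this.trans ?_
    have h3 : ∑ ω, Y ω ^ 2 = ∑ i, ∑ j, ((A i ∩ A j).card : ℝ) := by
      have : ∀ ω, Y ω ^ 2 = ∑ i, ∑ j, if ω ∈ A i ∩ A j then (1 : ℝ) else 0 := by
        intro ω
        simp only [Y, sq, Finset.sum_mul_sum, Finset.mem_inter]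
        refine Finset.sum_congr rfl fun i _ => Finset.sum_congr rfl fun j _ => ?_
        by_cases h : ω ∈ A i <;> by_cases h' : ω ∈ A j <;> simp [h, h']
      simp only [this]
      rw [Finset.sum_comm]
      refine Finset.sum_congr rfl fun i _ => ?_
      rw [Finset.sum_comm]
      refine Finset.sum_congr rfl fun j _ => ?_
      rw [Finset.sum_boole]
      congr 2
      ext ω
      simp
    rw [h3]
    have h4 : ∀ i j, ((A i ∩ A j).card : ℝ) ≤ (if i = j then p * W else 0) + p ^ 2 * W := by
      intro i j
      by_cases h : i = j
      · subst h
        simp only [Finset.inter_self, h1, if_true]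
        have : 0 ≤ p ^ 2 * W := by positivity
        linarith
      · rw [h2 i j h]; simp [h]
    calc ∑ i, ∑ j, ((A i ∩ A j).card : ℝ)
        ≤ ∑ i : ι, ∑ j : ι, ((if i = j then p * W else 0) + p ^ 2 * W) :=
          Finset.sum_le_sum fun i _ => Finset.sum_le_sum fun j _ => h4 i j
      _ = (E + E ^ 2) * W := by
          simp [Finset.sum_add_distrib, hE]; ring
  have hcs : (E * W) ^ 2 ≤ B.card * ((E + E ^ 2) * W) := by
    rw [← hsum]
    exact (sq_sum_le_card_mul_sum_sq).trans (by gcongr)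
  rcases hE0.eq_or_lt with h0 | h0
  · rw [← h0]; simp
  rcases hW0.eq_or_lt with h5 | h5
  · rw [← h5]; simp only [zero_sub]
    have : (0:ℝ) ≤ B.card := by positivity
    nlinarith
  · have : E * W ≤ B.card * (1 + E) := by
      have h6 : 0 < E * W := by positivity
      refine le_of_mul_le_mul_right ?_ h6
      nlinarith
    linarith

/-- The annihilator of the socle generator `g ^ (s - 1)` is the maximal ideal. -/
theorem IsChainData.pow_mul_eq_zero_iff {s q : ℕ} (hs : 1 ≤ s) {A : Type*} [CommRing A] {g : A}
    (h : IsChainData s q A g) (x : A) : g ^ (s - 1) * x = 0 ↔ x ∈ Ideal.span {g} := by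
  constructor
  · intro hx
    by_contra hn
    have hu : IsUnit x := by
      by_contra hu
      exact hn (h.2.1 x hu)
    exact h.2.2.2.1 ((hu.mul_left_eq_zero).1 hx)
  · intro hx
    obtain ⟨y, rfl⟩ := Ideal.mem_span_singleton'.1 hx
    have : g ^ s = g ^ (s - 1) * g := by rw [← pow_succ]; congr 1; omega
    have h2 := h.2.2.1
    rw [this] at h2
    linear_combination y * h2

theorem IsChainData.isUnit_iff {s q : ℕ} {A : Type*} [CommRing A] {g : A}
    (h : IsChainData s q A g) (x : A) : IsUnit x ↔ x ∉ Ideal.span {g} := by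
  constructor
  · intro hu hx
    exact h.1.ne_top (Ideal.eq_top_of_isUnit_mem _ hx hu)
  · intro hn
    by_contra hu
    exact hn (h.2.1 x hu)

/-- A finite chain ring of length `s` has `q ^ s` elements: multiplication by `g ^ j` identifies the
residue field with the kernel of `A / g ^ (j + 1) → A / g ^ j`. -/
theorem IsChainData.natCard_eq {s q : ℕ} {A : Type*} [CommRing A] [Finite A] {g : A}
    (h : IsChainData s q A g) : Nat.card A = q ^ s := by
  have key : ∀ j ≤ s, Nat.card (A ⧸ Ideal.span {g ^ j}) = q ^ j := by
    intro j
    induction j with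
    | zero =>
      intro _
      simp
    | succ j ih =>
      intro hj
      have hle : Ideal.span {g ^ (j + 1)} ≤ Ideal.span {g ^ j} := by
        rw [Ideal.span_singleton_le_span_singleton]
        exact pow_dvd_pow _ (Nat.le_succ j)
      let f : A →ₗ[A] A ⧸ Ideal.span {g ^ (j + 1)} :=
        (Submodule.mkQ (Ideal.span {g ^ (j + 1)})).comp (LinearMap.mulLeft A (g ^ j))
      have hker : LinearMap.ker f = Ideal.span {g} := by
        ext x
        simp only [f, LinearMap.mem_ker, LinearMap.comp_apply, LinearMap.mulLeft_apply,
          Submodule.mkQ_apply, Submodule.Quotient.mk_eq_zero]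
        constructor
        · intro hx
          obtain ⟨y, hy⟩ := Ideal.mem_span_singleton'.1 hx
          by_contra hn
          have hu : IsUnit (x - y * g) := by
            rw [h.isUnit_iff]
            intro h'
            apply hn
            have := Ideal.add_mem _ h' (Ideal.mul_mem_left _ y (Ideal.mem_span_singleton_self g))
            simpa using this
          have h0 : g ^ j * (x - y * g) = 0 := by rw [mul_sub, ← hy]; ring
          have h1 : g ^ j = 0 := (hu.mul_left_eq_zero).1 h0
          apply h.2.2.2.1
          exact pow_eq_zero_of_le (by omega) h1
        · intro hx
          obtain ⟨y, rfl⟩ := Ideal.mem_span_singleton'.1 hx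
          exact Ideal.mem_span_singleton'.2 ⟨y, by ring⟩
      have hrange : LinearMap.range f =
          Submodule.map (Submodule.mkQ (Ideal.span {g ^ (j + 1)})) (Ideal.span {g ^ j}) := by
        rw [LinearMap.range_comp]
        congr 1
        ext x
        simp only [LinearMap.mem_range, LinearMap.mulLeft_apply, Ideal.mem_span_singleton']
        exact ⟨fun ⟨y, hy⟩ => ⟨y, by rw [mul_comm, hy]⟩, fun ⟨y, hy⟩ => ⟨y, by rw [mul_comm, hy]⟩⟩
      have h1 := Submodule.card_eq_card_quotient_mul_card (LinearMap.range f)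
      rw [Nat.card_congr (LinearMap.quotKerEquivRange f).symm.toEquiv, hker] at h1
      have h3 : Nat.card ((A ⧸ Ideal.span {g ^ (j + 1)}) ⧸ LinearMap.range f) =
          Nat.card (A ⧸ Ideal.span {g ^ j}) := by
        rw [hrange]
        exact Nat.card_congr (Submodule.quotientQuotientEquivQuotient _ _ hle).toEquiv
      rw [h1, h3, ih (by omega), h.2.2.2.2, pow_succ, mul_comm]
  have h1 := key s le_rfl
  rw [h.2.2.1] at h1
  rw [← h1]
  have : (Ideal.span {(0 : A)}) = ⊥ := by simp
  rw [this]
  exact Nat.card_congr (Submodule.quotEquivOfEqBot _ rfl).symm.toEquiv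

/-! ### Matrices of bounded rank over a finite field -/

/-- The left-hand side counts the matrices whose first `t` rows are independent and whose remaining rows are
combinations of these. -/
theorem lowRank_card_lower {F : Type*} [Field F] [Fintype F] {m n t : ℕ} (htm : t ≤ m)
    (htn : t ≤ n) :
    (Fintype.card F) ^ (t * (n - t)) *
        ∏ i : Fin t, ((Fintype.card F) ^ m - (Fintype.card F) ^ (i : ℕ)) ≤
      Nat.card {x : Fin n → Fin m → F //
        Module.finrank F (Submodule.span F (Set.range x)) ≤ t} := by
  classical
  have hli := card_linearIndependent (K := F) (V := Fin m → F) (k := t) (by simpa using htm)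
  rw [Module.finrank_fin_fun] at hli
  rw [← hli]
  have hc : (Fintype.card F) ^ (t * (n - t)) = Nat.card (Fin (n - t) → Fin t → F) := by
    simp [Nat.card_eq_fintype_card, pow_mul]
  rw [hc, ← Nat.card_prod]
  let g : (Fin (n - t) → Fin t → F) × {v : Fin t → Fin m → F // LinearIndependent F v} →
      (Fin n → Fin m → F) := fun p j =>
    if h : (j : ℕ) < t then p.2.1 ⟨j, h⟩
    else ∑ i, p.1 ⟨j - t, by omega⟩ i • p.2.1 i
  have hg : ∀ p, Module.finrank F (Submodule.span F (Set.range (g p))) ≤ t := by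
    intro p
    have h1 : Submodule.span F (Set.range (g p)) ≤ Submodule.span F (Set.range p.2.1) := by
      rw [Submodule.span_le]
      rintro _ ⟨j, rfl⟩
      by_cases h : (j : ℕ) < t
      · simp only [g, h, dif_pos]
        exact Submodule.subset_span ⟨_, rfl⟩
      · simp only [g, h]
        exact Submodule.sum_mem _ fun i _ => Submodule.smul_mem _ _ (Submodule.subset_span ⟨_, rfl⟩)
    refine (Submodule.finrank_mono h1).trans ?_
    have h2 := finrank_range_le_card (R := F) p.2.1
    rw [Fintype.card_fin] at h2
    exact h2
  refine Nat.card_le_card_of_injective (fun p => ⟨g p, hg p⟩) ?_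
  rintro ⟨c, v, hv⟩ ⟨c', v', hv'⟩ h
  have h : g (c, ⟨v, hv⟩) = g (c', ⟨v', hv'⟩) := congrArg Subtype.val h
  have hvv : v = v' := by
    funext i
    have := congrFun h ⟨i, by omega⟩
    simpa [g] using this
  subst hvv
  have : c = c' := by
    funext j
    have h1 := congrFun h ⟨j + t, by omega⟩
    simp only [g, Nat.not_lt.2 (Nat.le_add_left t (j : ℕ)), dif_neg, not_false_eq_true,
      Nat.add_sub_cancel, Fin.eta] at h1
    have h2 : ∑ i, (c j i - c' j i) • v i = 0 := by
      simp only [sub_smul, Finset.sum_sub_distrib, h1, sub_self]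
    funext i
    exact sub_eq_zero.1 (Fintype.linearIndependent_iff.1 hv _ h2 i)
  subst this
  rfl

/-- A matrix of rank at most `t` is determined by a set of `t` rows spanning its row space, these
rows, and the coefficients of the other rows. -/
theorem lowRank_card_upper {F : Type*} [Field F] [Fintype F] {m n t : ℕ} (htn : t ≤ n) :
    Nat.card {x : Fin n → Fin m → F //
        Module.finrank F (Submodule.span F (Set.range x)) ≤ t} ≤
      n.choose t * (Fintype.card F) ^ (t * m + (n - t) * t) := by
  classical
  let Idx := {I : Finset (Fin n) // I.card = t}
  let g : (Σ I : Idx, (I.1 → Fin m → F) × ((I.1ᶜ : Finset (Fin n)) → I.1 → F)) →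
      (Fin n → Fin m → F) := fun p j =>
    if h : j ∈ p.1.1 then p.2.1 ⟨j, h⟩
    else ∑ i, p.2.2 ⟨j, Finset.mem_compl.2 h⟩ i • p.2.1 i
  have hsurj : ∀ x : Fin n → Fin m → F,
      Module.finrank F (Submodule.span F (Set.range x)) ≤ t → ∃ p, g p = x := by
    intro x hx
    obtain ⟨κ, a, ha, hspan, hli⟩ := exists_linearIndependent' F x
    have : Fintype κ := Fintype.ofInjective a ha
    have hcard : Fintype.card κ ≤ t := by
      rw [← finrank_span_eq_card hli, hspan]; exact hx
    obtain ⟨I, hI, hIc⟩ := Finset.exists_superset_card_eq (s := Finset.univ.image a) (n := t)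
      (Finset.card_image_le.trans (by simpa using hcard)) (by simpa using htn)
    have hmem : ∀ j, ∃ c : I → F, ∑ i, c i • x i = x j := by
      intro j
      have h1 : x j ∈ Submodule.span F (Set.range (x ∘ a)) := by
        rw [hspan]; exact Submodule.subset_span ⟨j, rfl⟩
      have h2 : Submodule.span F (Set.range (x ∘ a)) ≤
          Submodule.span F (Set.range (fun i : I => x i)) := by
        apply Submodule.span_mono
        rintro _ ⟨i, rfl⟩
        exact ⟨⟨a i, hI (Finset.mem_image_of_mem _ (Finset.mem_univ _))⟩, rfl⟩
      exact (Submodule.mem_span_range_iff_exists_fun F).1 (h2 h1)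
    choose c hc using hmem
    refine ⟨⟨⟨I, hIc⟩, fun i => x i, fun j => c j⟩, ?_⟩
    funext j
    by_cases h : j ∈ I
    · simp [g, h]
    · simp only [g, h, dif_neg, not_false_eq_true]
      exact hc j
  have hle : Nat.card {x : Fin n → Fin m → F //
        Module.finrank F (Submodule.span F (Set.range x)) ≤ t} ≤
      Nat.card (Σ I : Idx, (I.1 → Fin m → F) × ((I.1ᶜ : Finset (Fin n)) → I.1 → F)) := by
    choose f hf using hsurj
    refine Nat.card_le_card_of_injective (fun x => f x.1 x.2) ?_
    intro x y h
    apply Subtype.ext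
    rw [← hf x.1 x.2, ← hf y.1 y.2]
    exact congrArg g h
  refine hle.trans (le_of_eq ?_)
  rw [Nat.card_eq_fintype_card, Fintype.card_sigma]
  have hI : ∀ I : Idx, Fintype.card ((I.1 → Fin m → F) × ((I.1ᶜ : Finset (Fin n)) → I.1 → F)) =
      (Fintype.card F) ^ (t * m + (n - t) * t) := by
    intro I
    have h1 : I.1ᶜ.card = n - t := by rw [Finset.card_compl, I.2]; simp
    rw [Fintype.card_prod, Fintype.card_fun, Fintype.card_fun, Fintype.card_fun, Fintype.card_fun,
      Fintype.card_coe, Fintype.card_coe, h1, I.2, Fintype.card_fin, pow_add, ← pow_mul, ← pow_mul,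
      mul_comm m t, mul_comm t (n - t)]
  rw [Finset.sum_congr rfl (fun I _ => hI I), Finset.sum_const, Finset.card_univ, smul_eq_mul]
  congr 1
  simp [Idx, Fintype.card_finset_len]

/-! ### Minimal number of generators, bases and `GL` -/

theorem mu_le_of_span_eq {A : Type*} [Semiring A] {M : Type*} [AddCommMonoid M] [Module A M]
    {C : Submodule A M} {t : ℕ} (f : Fin t → M) (hf : Submodule.span A (Set.range f) = C) :
    mu A C ≤ t :=
  Nat.sInf_le ⟨f, hf⟩

/-- The infimum defining `mu` is attained; finiteness of `M` keeps it from being the junk value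
`sInf ∅ = 0`. -/
theorem exists_span_eq_mu {A : Type*} [Semiring A] {M : Type*} [AddCommMonoid M] [Module A M]
    [Finite M] (C : Submodule A M) :
    ∃ f : Fin (mu A C) → M, Submodule.span A (Set.range f) = C := by
  apply Nat.sInf_mem (s := {k : ℕ | ∃ f : Fin k → M, Submodule.span A (Set.range f) = C})
  have := Fintype.ofFinite C
  refine ⟨Fintype.card C, fun i => ((Fintype.equivFin C).symm i : C), ?_⟩
  have : (Set.range fun i => (((Fintype.equivFin C).symm i : C) : M)) = (C : Set M) := by
    ext x
    constructor
    · rintro ⟨i, rfl⟩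
      exact Subtype.coe_prop _
    · intro hx
      exact ⟨Fintype.equivFin C ⟨x, hx⟩, by simp⟩
  rw [this, Submodule.span_eq]

theorem mu_map_le {A : Type*} [Semiring A] {M : Type*} [AddCommMonoid M] [Module A M]
    [Finite M] (C : Submodule A M) (φ : M →ₗ[A] M) : mu A (C.map φ) ≤ mu A C := by
  obtain ⟨f, hf⟩ := exists_span_eq_mu C
  refine mu_le_of_span_eq (φ ∘ f) ?_
  rw [Set.range_comp, ← Submodule.map_span, hf]

theorem mu_bot {A : Type*} [Semiring A] {M : Type*} [AddCommMonoid M]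
    [Module A M] : mu A (⊥ : Submodule A M) = 0 :=
  Nat.le_zero.1 (mu_le_of_span_eq (Fin.elim0) (by simp))

/-- Over a nontrivial commutative ring, a linearly independent generating family has the minimal
possible size. -/
theorem mu_span_eq_card {A : Type*} [CommRing A] [Nontrivial A] {M : Type*} [AddCommGroup M]
    [Module A M] [Finite M] {k : ℕ} (T : Fin k → M) (hT : LinearIndependent A T) :
    mu A (Submodule.span A (Set.range T)) = k := by
  apply le_antisymm (mu_le_of_span_eq T rfl)
  obtain ⟨f, hf⟩ := exists_span_eq_mu (Submodule.span A (Set.range T))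
  have h1 := finrank_range_le_card (R := A) f
  rw [Fintype.card_fin, Set.finrank, hf, finrank_span_eq_card hT, Fintype.card_fin] at h1
  exact h1

/-- Linearly independent `k`-tuples of the ambient module spanning `C` are the bases of `C` indexed
by `Fin k`. -/
noncomputable def tupleEquivBasis {A : Type*} [CommRing A] {M : Type*}
    [AddCommGroup M] [Module A M] (k : ℕ) (C : Submodule A M) :
    {T : Fin k → M // LinearIndependent A T ∧ Submodule.span A (Set.range T) = C} ≃
      Module.Basis (Fin k) A C where
  toFun T := (Module.Basis.span T.2.1).map (LinearEquiv.ofEq _ _ T.2.2)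
  invFun b := ⟨fun i => (b i : M),
    b.linearIndependent.map' C.subtype (Submodule.ker_subtype C), by
      have : Set.range (fun i => (b i : M)) = C.subtype '' Set.range b := by
        rw [← Set.range_comp]; rfl
      rw [this, ← Submodule.map_span, b.span_eq, Submodule.map_top, Submodule.range_subtype]⟩
  left_inv T := by
    apply Subtype.ext
    funext i
    simp [Module.Basis.span_apply]
  right_inv b := by
    apply Module.Basis.eq_of_apply_eq
    intro i
    apply Subtype.ext
    simp [Module.Basis.span_apply]

/-- A basis indexed by `Fin k` is a coordinate isomorphism to `A ^ k`. -/
noncomputable def basisEquivLinearEquiv {A : Type*} [CommRing A] {M : Type*} [AddCommGroup M]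
    [Module A M] {k : ℕ} : Module.Basis (Fin k) A M ≃ (M ≃ₗ[A] (Fin k → A)) where
  toFun b := b.equivFun
  invFun e := Module.Basis.ofEquivFun e
  left_inv b := by simp
  right_inv e := by simp

theorem natCard_basis {A : Type*} [CommRing A] {M : Type*} [AddCommGroup M] [Module A M] {k : ℕ}
    (b : Module.Basis (Fin k) A M) :
    Nat.card (Module.Basis (Fin k) A M) = Nat.card (GL (Fin k) A) := by
  have e1 : (M ≃ₗ[A] (Fin k → A)) ≃ ((Fin k → A) ≃ₗ[A] (Fin k → A)) :=
    { toFun := fun e => b.equivFun.symm.trans e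
      invFun := fun e => b.equivFun.trans e
      left_inv := fun e => by ext; simp
      right_inv := fun e => LinearEquiv.ext fun x => by
        simp only [LinearEquiv.trans_apply, LinearEquiv.apply_symm_apply] }
  exact Nat.card_congr ((basisEquivLinearEquiv.trans e1).trans
    ((Matrix.GeneralLinearGroup.toLin.trans
      (LinearMap.GeneralLinearGroup.generalLinearEquiv A (Fin k → A))).symm.toEquiv))

/-- Each free submodule with `mu = k` has exactly `|GL_k(A)|` bases, so counting such submodules
amounts to counting linearly independent `k`-tuples. -/
theorem natCard_tuples {A : Type*} [CommRing A] [Nontrivial A] [Finite A] {M : Type*}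
    [AddCommGroup M] [Module A M] [Finite M] (k : ℕ) (P : Submodule A M → Prop) :
    Nat.card {T : Fin k → M // LinearIndependent A T ∧ P (Submodule.span A (Set.range T))} =
      Nat.card {C : Submodule A M // Module.Free A C ∧ mu A C = k ∧ P C} *
        Nat.card (GL (Fin k) A) := by
  classical
  let Codes := {C : Submodule A M // Module.Free A C ∧ mu A C = k ∧ P C}
  have hfin : Finite (Submodule A M) := inferInstance
  have hfc : Fintype Codes := Fintype.ofFinite _
  let e : {T : Fin k → M // LinearIndependent A T ∧ P (Submodule.span A (Set.range T))} ≃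
      (Σ C : Codes, {T : Fin k → M //
        LinearIndependent A T ∧ Submodule.span A (Set.range T) = C.1}) :=
    { toFun := fun T => ⟨⟨Submodule.span A (Set.range T.1),
        Module.Free.of_basis (Module.Basis.span T.2.1), mu_span_eq_card T.1 T.2.1, T.2.2⟩,
        ⟨T.1, T.2.1, rfl⟩⟩
      invFun := fun p => ⟨p.2.1, p.2.2.1, by rw [p.2.2.2]; exact p.1.2.2.2⟩
      left_inv := fun T => rfl
      right_inv := fun p => by
        obtain ⟨⟨C, hC⟩, ⟨T, hT, hTC⟩⟩ := p
        change Submodule.span A (Set.range T) = C at hTC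
        subst hTC
        rfl }
  rw [Nat.card_congr e, Nat.card_sigma]
  have : ∀ C : Codes, Nat.card {T : Fin k → M //
        LinearIndependent A T ∧ Submodule.span A (Set.range T) = C.1} =
        Nat.card (GL (Fin k) A) := by
    rintro ⟨C, hfree, hmu, _⟩
    rw [Nat.card_congr (tupleEquivBasis k C)]
    have hb := Module.finBasis A C
    have h1 : Module.finrank A C = k := by
      have h2 := (tupleEquivBasis _ C).symm hb
      rw [← hmu, ← mu_span_eq_card h2.1 h2.2.1, h2.2.2]
    exact natCard_basis (Module.finBasisOfFinrankEq A C h1)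
  simp only [this, Finset.sum_const, Finset.card_univ, smul_eq_mul]
  rw [Nat.card_eq_fintype_card (α := Codes)]

theorem natCard_isUnit (α : Type*) [Monoid α] : Nat.card {x : α // IsUnit x} = Nat.card αˣ := by
  refine Nat.card_congr (Equiv.ofBijective (fun u : αˣ => (⟨u, u.isUnit⟩ : {x : α // IsUnit x}))
    ⟨fun u v h => ?_, fun x => ?_⟩).symm
  · exact Units.ext (congrArg Subtype.val h)
  · obtain ⟨x, u, rfl⟩ := x
    exact ⟨u, rfl⟩

theorem natCard_matrix (X : Type*) (k : ℕ) :
    Nat.card (Matrix (Fin k) (Fin k) X) = Nat.card X ^ (k * k) := by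
  change Nat.card (Fin k → Fin k → X) = _
  rw [Nat.card_fun, Nat.card_fun, Nat.card_fin, pow_mul]

/-- A matrix over the local ring `A` is invertible exactly when its reduction is, so the proportion
of invertible matrices is the same over `A` and over the residue field `K`. -/
theorem natCard_GL {A K : Type*} [CommRing A] [Finite A] [Field K] [Fintype K]
    (π : A →+* K) (hsurj : Function.Surjective π) (hunit : ∀ x, IsUnit x ↔ π x ≠ 0) (k : ℕ) :
    Nat.card (GL (Fin k) A) * Nat.card K ^ (k * k) =
      (∏ i : Fin k, (Nat.card K ^ k - Nat.card K ^ (i : ℕ))) * Nat.card A ^ (k * k) := by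
  have h := natCard_preimage_mul (AddMonoidHom.mapMatrix π.toAddMonoidHom :
    Matrix (Fin k) (Fin k) A →+ Matrix (Fin k) (Fin k) K) (by
      intro X
      choose σ hσ using hsurj
      exact ⟨X.map σ, by ext; simp [hσ]⟩) IsUnit
  have h1 : ∀ X : Matrix (Fin k) (Fin k) A,
      IsUnit ((AddMonoidHom.mapMatrix π.toAddMonoidHom) X) ↔ IsUnit X := by
    intro X
    have : (AddMonoidHom.mapMatrix π.toAddMonoidHom) X = π.mapMatrix X := by ext; rfl
    rw [this, Matrix.isUnit_iff_isUnit_det, Matrix.isUnit_iff_isUnit_det, ← RingHom.map_det,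
      hunit, isUnit_iff_ne_zero]
  rw [Nat.card_congr (Equiv.subtypeEquivRight h1), natCard_isUnit, natCard_isUnit] at h
  have h2 := Matrix.card_GL_field (𝔽 := K) k
  rw [← Nat.card_eq_fintype_card] at h2
  rw [natCard_matrix, natCard_matrix, h2] at h
  exact h

/-! ### Reduction of the socle to the residue field -/

/-- `π : A → K` is the residue map of a chain ring with uniformizer `g` and `g ^ s = 0`. Only the
properties used below are recorded: units are detected by `π`, the socle `g ^ (s - 1) A` is isomorphic
to `K`, and it contains the annihilator of `g`. -/
structure IsChainReduction (s : ℕ) {A K : Type*} [CommRing A] [Field K] (g : A)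
    (π : A →+* K) : Prop where
  surj : Function.Surjective π
  isUnit_iff : ∀ x, IsUnit x ↔ π x ≠ 0
  pow_mul_eq_zero : ∀ x, g ^ (s - 1) * x = 0 ↔ π x = 0
  ann : ∀ x, g * x = 0 → ∃ y, x = g ^ (s - 1) * y
  pow_eq_zero : g ^ s = 0

/-- The quotient of `A` by the maximal ideal is a reduction. For the
field `ann`: an element `g ^ j * y` with `j < s - 1` killed by `g` has `y` divisible by `g`, since a
unit `y` would force `g ^ (s - 1) = 0`. -/
theorem IsChainData.exists_reduction.{u} {s q : ℕ} (hs : 1 ≤ s) {A : Type u} [CommRing A] {g : A}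
    (h : IsChainData s q A g) :
    ∃ (K : Type u) (_ : Field K) (π : A →+* K), IsChainReduction s g π ∧ Nat.card K = q := by
  have := h.1
  let _ := Ideal.Quotient.field (Ideal.span {g})
  refine ⟨A ⧸ Ideal.span {g}, inferInstance, Ideal.Quotient.mk _, ?_, h.2.2.2.2⟩
  refine ⟨Ideal.Quotient.mk_surjective, fun x => ?_, fun x => ?_, fun x hx => ?_, h.2.2.1⟩
  · rw [h.isUnit_iff, Ne, Ideal.Quotient.eq_zero_iff_mem]
  · rw [h.pow_mul_eq_zero_iff hs, Ideal.Quotient.eq_zero_iff_mem]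
  · by_cases hx0 : x = 0
    · exact ⟨0, by simp [hx0]⟩
    have key : ∀ j ≤ s - 1, ∃ y, x = g ^ j * y := by
      intro j
      induction j with
      | zero => exact fun _ => ⟨x, by simp⟩
      | succ j ih =>
        intro hj
        obtain ⟨y, hy⟩ := ih (by omega)
        have hny : ¬ IsUnit y := by
          intro hu
          have h1 : g ^ (j + 1) * y = 0 := by rw [pow_succ', mul_assoc, ← hy, hx]
          exact h.2.2.2.1 (pow_eq_zero_of_le hj ((hu.mul_left_eq_zero).1 h1))
        obtain ⟨z, rfl⟩ := Ideal.mem_span_singleton'.1 (h.2.1 y hny)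
        exact ⟨z, by rw [hy]; ring⟩
    exact key _ le_rfl

/-- Coordinates in the `R`-basis `b` of `S`, reduced to the residue field `F` of `R`. It is only
recorded as an additive map; `redVec_smul` gives its semilinearity over `π`. -/
noncomputable def redVec {R S F : Type*} [CommRing R] [CommRing S] [Algebra R S] [Field F] {m : ℕ}
    (π : R →+* F) (b : Module.Basis (Fin m) R S) : S →+ (Fin m → F) where
  toFun y j := π (b.repr y j)
  map_zero' := by ext; simp
  map_add' x y := by ext; simp

theorem redVec_smul {R S F : Type*} [CommRing R] [CommRing S] [Algebra R S] [Field F] {m : ℕ}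
    (π : R →+* F) (b : Module.Basis (Fin m) R S) (r : R) (y : S) :
    redVec π b (r • y) = π r • redVec π b y := by
  ext j; simp [redVec]

theorem redVec_surjective {R S F : Type*} [CommRing R] [CommRing S] [Algebra R S] [Field F] {m : ℕ}
    {π : R →+* F} (hπ : Function.Surjective π) (b : Module.Basis (Fin m) R S) :
    Function.Surjective (redVec π b) := by
  intro w
  choose σ hσ using hπ
  refine ⟨b.equivFun.symm (fun j => σ (w j)), ?_⟩
  ext j
  change π (b.equivFun _ j) = _
  rw [LinearEquiv.apply_symm_apply, hσ]

/-- Multiplication by `γ ^ (s - 1)` has the same kernel as reduction to the residue field. -/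
theorem redVec_eq_zero {R S F : Type*} [CommRing R] [CommRing S] [Algebra R S] [Field F] {m s : ℕ}
    {π : R →+* F} {γ : R} (hπ : IsChainReduction s γ π) (b : Module.Basis (Fin m) R S) (y : S) :
    γ ^ (s - 1) • y = 0 ↔ redVec π b y = 0 := by
  rw [← b.repr.map_eq_zero_iff, Finsupp.ext_iff, funext_iff]
  refine forall_congr' fun j => ?_
  simp [redVec, ← hπ.pow_mul_eq_zero]

/-- Inside the socle, the number of generators is a matrix rank: since `γ ^ (s - 1) S` is isomorphic to
`F ^ m` through `redVec`, the rank of the vector `γ ^ (s - 1) x` is the rank of the `n × m` matrix of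
reduced coordinates of `x`. -/
theorem mu_le_iff {R S F : Type*} [CommRing R] [CommRing S] [Finite S] [Algebra R S] [Field F]
    {m n s t : ℕ} {π : R →+* F} {γ : R} (hπ : IsChainReduction s γ π)
    (b : Module.Basis (Fin m) R S) (x : Fin n → S) :
    mu R (Submodule.span R (Set.range (γ ^ (s - 1) • x))) ≤ t ↔
      Module.finrank F (Submodule.span F (Set.range (fun i => redVec π b (x i)))) ≤ t := by
  have key : ∀ {a : ℕ} (f : Fin a → S) (y : S),
      γ ^ (s - 1) • y ∈ Submodule.span R (Set.range (γ ^ (s - 1) • f)) ↔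
        redVec π b y ∈ Submodule.span F (Set.range (fun i => redVec π b (f i))) := by
    intro a f y
    rw [Submodule.mem_span_range_iff_exists_fun, Submodule.mem_span_range_iff_exists_fun]
    have h1 : ∀ c : Fin a → R, ∑ i, c i • (γ ^ (s - 1) • f) i = γ ^ (s - 1) • y ↔
        ∑ i, π (c i) • redVec π b (f i) = redVec π b y := by
      intro c
      rw [← sub_eq_zero, ← sub_eq_zero (b := redVec π b y)]
      have e1 : ∑ i, c i • (γ ^ (s - 1) • f) i - γ ^ (s - 1) • y =
          γ ^ (s - 1) • (∑ i, c i • f i - y) := by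
        rw [smul_sub, Finset.smul_sum]
        congr 1
        exact Finset.sum_congr rfl fun i _ => smul_comm _ _ _
      rw [e1, redVec_eq_zero hπ b, map_sub, map_sum]
      simp only [redVec_smul]
    constructor
    · rintro ⟨c, hc⟩
      exact ⟨fun i => π (c i), (h1 c).1 hc⟩
    · rintro ⟨c, hc⟩
      choose σ hσ using hπ.surj
      exact ⟨fun i => σ (c i), (h1 _).2 (by simpa [hσ] using hc)⟩
  constructor
  · intro hmu
    obtain ⟨f, hf⟩ := exists_span_eq_mu (Submodule.span R (Set.range (γ ^ (s - 1) • x)))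
    have hmem : ∀ i, ∃ z : S, γ ^ (s - 1) • z = f i := by
      intro i
      have h1 : f i ∈ Submodule.span R (Set.range (γ ^ (s - 1) • x)) := by
        rw [← hf]; exact Submodule.subset_span ⟨i, rfl⟩
      obtain ⟨c, hc⟩ := (Submodule.mem_span_range_iff_exists_fun R).1 h1
      refine ⟨∑ j, c j • x j, ?_⟩
      rw [← hc, Finset.smul_sum]
      exact Finset.sum_congr rfl fun i _ => smul_comm _ _ _
    choose z hz using hmem
    have hzf : f = γ ^ (s - 1) • z := by funext i; exact (hz i).symm
    have hle : Submodule.span F (Set.range (fun i => redVec π b (x i))) ≤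
        Submodule.span F (Set.range (fun i => redVec π b (z i))) := by
      rw [Submodule.span_le]
      rintro _ ⟨i, rfl⟩
      refine (key z (x i)).1 ?_
      rw [← hzf, hf]
      exact Submodule.subset_span ⟨i, rfl⟩
    refine (Submodule.finrank_mono hle).trans (le_trans ?_ hmu)
    have h2 := finrank_range_le_card (R := F) (fun i => redVec π b (z i))
    rw [Fintype.card_fin] at h2
    exact h2
  · intro hfr
    refine le_trans ?_ hfr
    set W := Submodule.span F (Set.range (fun i => redVec π b (x i))) with hW
    have bW := Module.finBasis F W
    choose σ hσ using redVec_surjective hπ.surj b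
    let z : Fin (Module.finrank F W) → S := fun i => σ (bW i)
    have hz : Submodule.span F (Set.range (fun i => redVec π b (z i))) = W := by
      have e1 : Set.range (fun i => redVec π b (z i)) = W.subtype '' Set.range bW := by
        rw [← Set.range_comp]
        congr 1
        funext i
        simp [z, hσ]
      rw [e1, ← Submodule.map_span, bW.span_eq, Submodule.map_top, Submodule.range_subtype]
    refine mu_le_of_span_eq (γ ^ (s - 1) • z) ?_
    apply le_antisymm
    · rw [Submodule.span_le]
      rintro _ ⟨i, rfl⟩
      refine (key x (z i)).2 ?_
      rw [← hW, ← hz]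
      exact Submodule.subset_span ⟨i, rfl⟩
    · rw [Submodule.span_le]
      rintro _ ⟨i, rfl⟩
      refine (key z (x i)).2 ?_
      rw [hz]
      exact Submodule.subset_span ⟨i, rfl⟩

/-- For uniform `x` in `S ^ n`, the probability that `γ ^ (s - 1) x` has rank at most `t` is the
probability that a uniform `n × m` matrix over `F` has rank at most `t`. -/
theorem natCard_lowRank {R S F : Type*} [CommRing R] [CommRing S] [Finite S] [Algebra R S]
    [Field F] [Finite F]
    {m n s t : ℕ} {π : R →+* F} {γ : R} (hπ : IsChainReduction s γ π)
    (b : Module.Basis (Fin m) R S) :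
    Nat.card {x : Fin n → S // mu R (Submodule.span R (Set.range (γ ^ (s - 1) • x))) ≤ t} *
        Nat.card F ^ (m * n) =
      Nat.card {x : Fin n → Fin m → F //
        Module.finrank F (Submodule.span F (Set.range x)) ≤ t} * Nat.card (Fin n → S) := by
  let f : (Fin n → S) →+ (Fin n → Fin m → F) :=
    { toFun := fun x i => redVec π b (x i)
      map_zero' := by ext; simp
      map_add' := fun x y => by ext; simp }
  have hf : Function.Surjective f := by
    intro w
    choose σ hσ using redVec_surjective hπ.surj b
    exact ⟨fun i => σ (w i), by funext i; exact hσ _⟩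
  have h := natCard_preimage_mul f hf (fun x =>
    Module.finrank F (Submodule.span F (Set.range x)) ≤ t)
  have h1 : ∀ x : Fin n → S, mu R (Submodule.span R (Set.range (γ ^ (s - 1) • x))) ≤ t ↔
      Module.finrank F (Submodule.span F (Set.range (f x))) ≤ t := fun x => mu_le_iff hπ b x
  rw [Nat.card_congr (Equiv.subtypeEquivRight h1), ← h, Nat.card_fun, Nat.card_fun, Nat.card_fin,
    Nat.card_fin, pow_mul]

/-! ### Good tuples and projective points -/

/-- Every nonzero vector of `A ^ k` has a multiple in the socle which is `g ^ (s - 1)` times the chosen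
lift of a point of projective space over the residue field. -/
theorem exists_smul_eq_rep {s : ℕ} {A K : Type*} [CommRing A] [Field K] {g : A} {π : A →+* K}
    (hπ : IsChainReduction s g π) {k : ℕ} (lift : Projectivization K (Fin k → K) → Fin k → A)
    (hlift : ∀ P i, π (lift P i) = P.rep i) (a : Fin k → A) (ha : a ≠ 0) :
    ∃ (c : A) (P : Projectivization K (Fin k → K)), c • a = g ^ (s - 1) • lift P := by
  classical
  -- `i` is the last exponent for which `g ^ i • a` is nonzero
  have hex : ∃ i, g ^ i • a = 0 := ⟨s, by rw [hπ.pow_eq_zero, zero_smul]⟩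
  obtain ⟨i, hi⟩ : ∃ i, Nat.find hex = i + 1 := by
    refine Nat.exists_eq_succ_of_ne_zero fun h => ha ?_
    have := Nat.find_spec hex
    rw [h] at this
    simpa using this
  have hz : g ^ (i + 1) • a = 0 := hi ▸ Nat.find_spec hex
  have hnz : g ^ i • a ≠ 0 := Nat.find_min hex (by omega)
  have hann : ∀ j, ∃ y, g ^ i * a j = g ^ (s - 1) * y := by
    intro j
    refine hπ.ann _ ?_
    have := congrFun hz j
    simp only [Pi.smul_apply, smul_eq_mul, Pi.zero_apply] at this
    rw [← mul_assoc, ← pow_succ']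
    exact this
  choose y hy using hann
  have hya : g ^ i • a = g ^ (s - 1) • y := by
    funext j
    simp [hy]
  let w : Fin k → K := fun j => π (y j)
  have hw : w ≠ 0 := by
    intro hw
    apply hnz
    rw [hya]
    funext j
    simp only [Pi.smul_apply, smul_eq_mul, Pi.zero_apply]
    exact (hπ.pow_mul_eq_zero _).2 (congrFun hw j)
  obtain ⟨u, hu⟩ := Projectivization.exists_smul_eq_mk_rep K w hw
  obtain ⟨v, hv⟩ := hπ.surj u
  refine ⟨v * g ^ i, Projectivization.mk K w hw, ?_⟩
  rw [mul_smul, hya]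
  funext j
  simp only [Pi.smul_apply, smul_eq_mul]
  rw [← sub_eq_zero]
  have h1 : v * (g ^ (s - 1) * y j) - g ^ (s - 1) * lift (Projectivization.mk K w hw) j =
      g ^ (s - 1) * (v * y j - lift (Projectivization.mk K w hw) j) := by ring
  rw [h1, hπ.pow_mul_eq_zero, map_sub, map_mul, hv, hlift, ← hu]
  simp [w, Units.smul_def]

/-- Let `w` be a weight that does not increase under scalar multiplication. A tuple `T` is independent
and spans a module of minimum weight at least `d` if and only if this can be tested on the socle
vectors `g ^ (s - 1) T(lift P)`, one for each projective point `P`. Independence comes for free because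
a vanishing combination would have weight `0 < d`. -/
theorem good_iff {s : ℕ} {A K V : Type*} [CommRing A] [Field K] {g : A} {π : A →+* K}
    (hπ : IsChainReduction s g π) [AddCommGroup V] [Module A V] {k d : ℕ} (hd : 1 ≤ d)
    (w : V → ℕ) (hw0 : w 0 = 0) (hw : ∀ (a : A) x, w (a • x) ≤ w x)
    (lift : Projectivization K (Fin k → K) → Fin k → A)
    (hlift : ∀ P i, π (lift P i) = P.rep i) (T : Fin k → V) :
    (LinearIndependent A T ∧ ∀ x ∈ Submodule.span A (Set.range T), x ≠ 0 → d ≤ w x) ↔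
      ∀ P, ¬ w (g ^ (s - 1) • ∑ i, lift P i • T i) < d := by
  constructor
  · rintro ⟨hT, hC⟩ P
    rw [not_lt]
    have hmem : g ^ (s - 1) • ∑ i, lift P i • T i ∈ Submodule.span A (Set.range T) :=
      Submodule.smul_mem _ _ (Submodule.sum_mem _ fun i _ =>
        Submodule.smul_mem _ _ (Submodule.subset_span ⟨i, rfl⟩))
    refine hC _ hmem fun h0 => ?_
    rw [Finset.smul_sum] at h0
    simp only [← mul_smul] at h0
    apply P.rep_nonzero
    funext i
    have := Fintype.linearIndependent_iff.1 hT _ h0 i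
    rw [hπ.pow_mul_eq_zero, hlift] at this
    exact this
  · intro h
    have key : ∀ a : Fin k → A, a ≠ 0 → d ≤ w (∑ i, a i • T i) := by
      intro a ha
      obtain ⟨c, P, hc⟩ := exists_smul_eq_rep hπ lift hlift a ha
      have h1 : c • ∑ i, a i • T i = g ^ (s - 1) • ∑ i, lift P i • T i := by
        rw [Finset.smul_sum, Finset.smul_sum]
        refine Finset.sum_congr rfl fun i _ => ?_
        rw [← mul_smul, ← mul_smul]
        have := congrFun hc i
        simp only [Pi.smul_apply, smul_eq_mul] at this
        rw [this]
      exact (not_lt.1 (h P)).trans (h1 ▸ hw c _)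
    constructor
    · rw [Fintype.linearIndependent_iff]
      intro a ha
      by_contra hn
      have ha0 : a ≠ 0 := by
        rintro rfl
        exact hn (fun _ => rfl)
      have := key a ha0
      rw [ha, hw0] at this
      omega
    · intro x hx hx0
      obtain ⟨a, rfl⟩ := (Submodule.mem_span_range_iff_exists_fun A).1 hx
      refine key a ?_
      rintro rfl
      simp at hx0

/-- Representatives of distinct projective points have a nonzero `2 × 2` minor. -/
theorem exists_minor_ne_zero {K : Type*} [Field K] {k : ℕ} {P Q : Projectivization K (Fin k → K)}
    (h : P ≠ Q) : ∃ i j, P.rep i * Q.rep j - P.rep j * Q.rep i ≠ 0 := by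
  by_contra! hn
  rw [← Projectivization.independent_pair_iff_ne, Projectivization.independent_iff] at h
  obtain ⟨i, hi⟩ := Function.ne_iff.1 P.rep_nonzero
  have hli : LinearIndependent K ![P.rep, Q.rep] := by
    have h3 : (Projectivization.rep ∘ ![P, Q]) = ![P.rep, Q.rep] := by
      funext x
      fin_cases x <;> rfl
    rw [← h3]
    exact h
  rw [LinearIndependent.pair_iff] at hli
  -- vanishing of the minors `(i, j)` is the relation `-Q_i P + P_i Q = 0`
  have h1 := hli (- Q.rep i) (P.rep i) (by
    funext j
    simp only [Pi.add_apply, Pi.smul_apply, smul_eq_mul, Pi.zero_apply]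
    linear_combination hn i j)
  exact hi h1.2

/-- For a uniform tuple `T`, the vectors `T(lift P)` are uniform in `V` because some coordinate of
`lift P` is a unit, and pairwise independent because two of them involve a unit `2 × 2` minor. Hence
`card_avoid_bounds` applies to the events `B (T(lift P))`. -/
theorem good_count {s : ℕ} {A K V : Type*} [CommRing A] [Field K] [Finite K] {g : A}
    {π : A →+* K} (hπ : IsChainReduction s g π) [AddCommGroup V] [Module A V] [Finite V]
    {k : ℕ} (B : V → Prop)
    (lift : Projectivization K (Fin k → K) → Fin k → A)
    (hlift : ∀ P i, π (lift P i) = P.rep i) :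
    let p : ℝ := (Nat.card {x : V // B x} : ℝ) / Nat.card V
    let N : ℝ := Nat.card (Projectivization K (Fin k → K))
    let G : ℝ := Nat.card {T : Fin k → V // ∀ P, ¬ B (∑ i, lift P i • T i)}
    (1 - N * p) * (Nat.card V : ℝ) ^ k ≤ G ∧ G * (1 + N * p) ≤ (Nat.card V : ℝ) ^ k := by
  classical
  intro p N G
  have := Fintype.ofFinite V
  have := Fintype.ofFinite (Projectivization K (Fin k → K))
  have hV : (0 : ℝ) < Nat.card V := by exact_mod_cast Nat.card_pos
  let ev : (Fin k → A) → ((Fin k → V) →+ V) := fun a =>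
    { toFun := fun T => ∑ i, a i • T i
      map_zero' := by simp
      map_add' := fun T T' => by simp [Finset.sum_add_distrib] }
  have hcardΩ : Nat.card (Fin k → V) = Nat.card V ^ k := by rw [Nat.card_fun, Nat.card_fin]
  have hΩ : (Fintype.card (Fin k → V) : ℝ) = (Nat.card V : ℝ) ^ k := by
    rw [← Nat.card_eq_fintype_card, hcardΩ]; push_cast; rfl
  have hsurj1 : ∀ P, Function.Surjective (ev (lift P)) := by
    intro P x
    obtain ⟨i, hi⟩ := Function.ne_iff.1 P.rep_nonzero
    have hu : IsUnit (lift P i) := by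
      rw [hπ.isUnit_iff, hlift]; exact hi
    obtain ⟨u, hu⟩ := hu
    refine ⟨Pi.single i ((↑u⁻¹ : A) • x), ?_⟩
    change ∑ j, lift P j • (Pi.single i ((↑u⁻¹ : A) • x) : Fin k → V) j = x
    rw [Finset.sum_eq_single i]
    · rw [Pi.single_eq_same, ← hu, ← mul_smul, Units.mul_inv, one_smul]
    · intro j _ hj
      rw [Pi.single_eq_of_ne hj, smul_zero]
    · simp
  have hsurj2 : ∀ P Q, P ≠ Q → Function.Surjective ((ev (lift P)).prod (ev (lift Q))) := by
    intro P Q hPQ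
    rintro ⟨x, y⟩
    obtain ⟨i, j, hij⟩ := exists_minor_ne_zero hPQ
    have hne : i ≠ j := by
      rintro rfl
      simp at hij
    have hu : IsUnit (lift P i * lift Q j - lift P j * lift Q i) := by
      rw [hπ.isUnit_iff]; simpa [hlift] using hij
    obtain ⟨u, hu⟩ := hu
    have hsum : ∀ (c : Fin k → A) (y z : V),
        ∑ l, c l • (Pi.single i y + Pi.single j z : Fin k → V) l = c i • y + c j • z := by
      intro c y z
      simp only [Pi.add_apply, smul_add, Finset.sum_add_distrib]
      congr 1
      · rw [Finset.sum_eq_single i]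
        · rw [Pi.single_eq_same]
        · intro l _ hl
          rw [Pi.single_eq_of_ne hl, smul_zero]
        · simp
      · rw [Finset.sum_eq_single j]
        · rw [Pi.single_eq_same]
        · intro l _ hl
          rw [Pi.single_eq_of_ne hl, smul_zero]
        · simp
    have huu : (↑u⁻¹ : A) * (lift P i * lift Q j - lift P j * lift Q i) = 1 := by
      rw [← hu, Units.inv_mul]
    -- Cramer rule for the unit minor on the coordinates `i` and `j`
    refine ⟨Pi.single i ((↑u⁻¹ : A) • (lift Q j • x - lift P j • y)) +
      Pi.single j ((↑u⁻¹ : A) • (lift P i • y - lift Q i • x)), ?_⟩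
    apply Prod.ext
    · change ∑ l, lift P l • _ = x
      rw [hsum]
      have : lift P i • (↑u⁻¹ : A) • (lift Q j • x - lift P j • y) +
          lift P j • (↑u⁻¹ : A) • (lift P i • y - lift Q i • x) =
          ((↑u⁻¹ : A) * (lift P i * lift Q j - lift P j * lift Q i)) • x := by module
      rw [this, huu, one_smul]
    · change ∑ l, lift Q l • _ = y
      rw [hsum]
      have : lift Q i • (↑u⁻¹ : A) • (lift Q j • x - lift P j • y) +
          lift Q j • (↑u⁻¹ : A) • (lift P i • y - lift Q i • x) =
          ((↑u⁻¹ : A) * (lift P i * lift Q j - lift P j * lift Q i)) • y := by module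
      rw [this, huu, one_smul]
  let E : Projectivization K (Fin k → K) → Finset (Fin k → V) := fun P =>
    Finset.univ.filter fun T => B (ev (lift P) T)
  have h1 : ∀ P, ((E P).card : ℝ) = p * Fintype.card (Fin k → V) := by
    intro P
    have h := natCard_preimage_mul (ev (lift P)) (hsurj1 P) B
    have hE : Nat.card {T : Fin k → V // B (ev (lift P) T)} = (E P).card := by
      rw [Nat.card_eq_fintype_card, Fintype.card_subtype]
    rw [hE, Nat.card_eq_fintype_card (α := Fin k → V)] at h
    have h' : ((E P).card : ℝ) * Nat.card V =
      Nat.card {x : V // B x} * Fintype.card (Fin k → V) := by exact_mod_cast h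
    simp only [p]
    field_simp
    linarith
  have h2 : ∀ P Q, P ≠ Q → ((E P ∩ E Q).card : ℝ) = p ^ 2 * Fintype.card (Fin k → V) := by
    intro P Q hPQ
    have h := natCard_preimage_mul _ (hsurj2 P Q hPQ) (fun z => B z.1 ∧ B z.2)
    have hE : Nat.card {T : Fin k → V // B ((ev (lift P)).prod (ev (lift Q)) T).1 ∧
        B ((ev (lift P)).prod (ev (lift Q)) T).2} = (E P ∩ E Q).card := by
      rw [Nat.card_eq_fintype_card, Fintype.card_subtype]
      congr 1
      ext T
      simp only [E, Finset.mem_inter, Finset.mem_filter, Finset.mem_univ, true_and]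
      exact Iff.rfl
    have hB : Nat.card {z : V × V // B z.1 ∧ B z.2} = Nat.card {x : V // B x} ^ 2 := by
      rw [Nat.card_congr Equiv.subtypeProdEquivProd, Nat.card_prod, sq]
    rw [hE, hB, Nat.card_prod, Nat.card_eq_fintype_card (α := Fin k → V)] at h
    have h' : ((E P ∩ E Q).card : ℝ) * (Nat.card V * Nat.card V) =
      Nat.card {x : V // B x} ^ 2 * Fintype.card (Fin k → V) := by exact_mod_cast h
    simp only [p]
    field_simp
    linarith
  have hp : 0 ≤ p := by positivity
  have hmain := card_avoid_bounds E p hp h1 h2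
  have hG : (Nat.card {T : Fin k → V // ∀ P, T ∉ E P} : ℝ) = G := by
    simp only [G]
    congr 1
    refine Nat.card_congr (Equiv.subtypeEquivRight fun T => ?_)
    simp [E, ev]
  rw [hG, hΩ, ← Nat.card_eq_fintype_card] at hmain
  exact hmain

/-! ### Bounds for the density -/

/-- With `N = NN s Q M k` and the formula of `natCard_GL` for `|GL_k|`, this reads
`N · |GL_k| = |V| ^ k · ∏ (1 - Q ^ i / Q ^ M)` where `|V| = Q ^ (s M)`. -/
theorem NN_mul_eq (s Q M k : ℕ) (hs : 1 ≤ s) (hQ : 2 ≤ Q) (hk : k ≤ M) :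
    NN s Q (M : ℤ) (k : ℤ) * (∏ i ∈ Finset.range k, ((Q : ℝ) ^ k - (Q : ℝ) ^ i)) *
        (Q : ℝ) ^ ((s - 1) * (k * k)) =
      ((Q : ℝ) ^ (s * M)) ^ k * ∏ i ∈ Finset.range k, (1 - (Q : ℝ) ^ i / (Q : ℝ) ^ M) := by
  have hQ1 : (1 : ℝ) < Q := by exact_mod_cast hQ
  have hQ0 : (0 : ℝ) < Q := by linarith
  obtain ⟨c, rfl⟩ := Nat.exists_eq_add_of_le hk
  obtain ⟨s, rfl⟩ := Nat.exists_eq_add_of_le' hs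
  have hprod : (∏ i ∈ Finset.Icc 1 k, ((Q : ℝ) ^ (((k + c : ℕ) : ℤ) - (i : ℤ) + 1) - 1) /
      ((Q : ℝ) ^ (i : ℤ) - 1)) * (∏ i ∈ Finset.range k, ((Q : ℝ) ^ k - (Q : ℝ) ^ i)) =
      ∏ i ∈ Finset.range k, ((Q : ℝ) ^ (k + c) * (1 - (Q : ℝ) ^ i / (Q : ℝ) ^ (k + c))) := by
    rw [Finset.prod_div_distrib]
    have e1 : ∏ i ∈ Finset.Icc 1 k, ((Q : ℝ) ^ (i : ℤ) - 1) =
        ∏ i ∈ Finset.range k, ((Q : ℝ) ^ (k - i) - 1) := by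
      have h1 : ∏ i ∈ Finset.Icc 1 k, ((Q : ℝ) ^ (i : ℤ) - 1) =
          ∏ i ∈ Finset.range k, ((Q : ℝ) ^ (i + 1) - 1) := by
        rw [← Finset.Ico_add_one_right_eq_Icc, Finset.prod_Ico_eq_prod_range]
        refine Finset.prod_congr (by simp) fun i _ => ?_
        rw [zpow_natCast, add_comm]
      rw [h1, ← Finset.prod_range_reflect]
      refine Finset.prod_congr rfl fun i hi => ?_
      have := Finset.mem_range.1 hi
      congr 2
      omega
    have e2 : ∏ i ∈ Finset.Icc 1 k, ((Q : ℝ) ^ (((k + c : ℕ) : ℤ) - (i : ℤ) + 1) - 1) =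
        ∏ i ∈ Finset.range k, ((Q : ℝ) ^ (k + c - i) - 1) := by
      rw [← Finset.Ico_add_one_right_eq_Icc, Finset.prod_Ico_eq_prod_range]
      refine Finset.prod_congr (by simp) fun i hi => ?_
      have : i < k := by simpa using hi
      rw [← zpow_natCast]
      congr 2
      push_cast [Nat.cast_sub (show i ≤ k + c by omega)]
      ring
    have hne : ∏ i ∈ Finset.range k, ((Q : ℝ) ^ (k - i) - 1) ≠ 0 := by
      rw [Finset.prod_ne_zero_iff]
      intro i hi
      have : i < k := Finset.mem_range.1 hi
      have := one_lt_pow₀ hQ1 (show k - i ≠ 0 by omega)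
      linarith
    rw [e1, e2, div_mul_eq_mul_div, div_eq_iff hne, ← Finset.prod_mul_distrib,
      ← Finset.prod_mul_distrib]
    refine Finset.prod_congr rfl fun i hi => ?_
    have hi : i < k := Finset.mem_range.1 hi
    have h1 : (Q : ℝ) ^ k = Q ^ (k - i) * Q ^ i := by rw [← pow_add]; congr 1; omega
    have h2 : (Q : ℝ) ^ (k + c) = Q ^ (k + c - i) * Q ^ i := by rw [← pow_add]; congr 1; omega
    have h3 : (Q : ℝ) ^ (k + c) * (1 - (Q : ℝ) ^ i / (Q : ℝ) ^ (k + c)) =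
        Q ^ (k + c) - Q ^ i := by field_simp
    rw [h3, h1, h2]
    ring
  rw [NN, if_neg (by omega), Int.toNat_natCast, mul_assoc (_ ^ _), hprod, Finset.prod_mul_distrib,
    Finset.prod_const, Finset.card_range]
  have e3 : (Q : ℝ) ^ ((k : ℤ) * (((k + c : ℕ) : ℤ) - k) * (((s + 1 : ℕ) : ℤ) - 1)) =
      (Q : ℝ) ^ (k * c * s) := by
    rw [← zpow_natCast]; congr 1; push_cast; ring
  rw [e3, Nat.add_sub_cancel]
  have e4 : ((Q : ℝ) ^ ((s + 1) * (k + c))) ^ k =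
      (Q : ℝ) ^ (k * c * s) * (Q ^ (k + c)) ^ k * Q ^ (s * (k * k)) := by
    rw [← pow_mul, ← pow_mul, ← pow_add, ← pow_add]; congr 1; ring
  rw [e4]
  ring

theorem prod_one_sub_pos (Q : ℝ) (hQ : 1 < Q) (M k : ℕ) (hk : k ≤ M) :
    0 < ∏ i ∈ Finset.range k, (1 - Q ^ i / Q ^ M) := by
  refine Finset.prod_pos fun i hi => ?_
  have hi := Finset.mem_range.1 hi
  have h1 : Q ^ i < Q ^ M := pow_lt_pow_right₀ hQ (by omega)
  have h2 : 0 < Q ^ M := by positivity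
  rw [sub_pos, div_lt_one h2]
  exact h1

/-- For a nonzero code, the minimum distance is the minimum weight. Without a nonzero codeword
`minDist` would be the junk value `sInf ∅ = 0`. -/
theorem le_minDist_iff {R S A : Type*} [CommRing R] [CommRing S] [Algebra R S] [Finite S]
    [CommRing A] [Module A S] {n d : ℕ}
    (C : Submodule A (Fin n → S)) (hC : ∃ x ∈ C, x ≠ 0) :
    (d : ℝ) ≤ minDist (rankD R) (C : Set (Fin n → S)) ↔
      ∀ x ∈ C, x ≠ 0 → d ≤ mu R (Submodule.span R (Set.range x)) := by
  rw [minDist, le_csInf_iff]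
  · constructor
    · intro h x hx hx0
      have := h _ ⟨x, hx, 0, C.zero_mem, hx0, rfl⟩
      rw [rankD, sub_zero] at this
      exact_mod_cast this
    · rintro h _ ⟨x, hx, y, hy, hxy, rfl⟩
      rw [rankD]
      exact_mod_cast h (x - y) (C.sub_mem hx hy) (sub_ne_zero.2 hxy)
  · refine ⟨0, ?_⟩
    rintro _ ⟨x, hx, y, hy, hxy, rfl⟩
    rw [rankD]
    positivity
  · obtain ⟨x, hx, hx0⟩ := hC
    exact ⟨_, x, hx, 0, C.zero_mem, hx0, rfl⟩

set_option maxHeartbeats 1000000 in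
/-- The density for a single prime power `q`. Up to the factors `π` and `ρ`, which tend to `1`, the
expected number of projective points violating the distance condition lies between `q ^ e` and
`2 * n.choose t * q ^ e`: there are about `q ^ (ℓ (k - 1))` points, and each is bad with probability
about `q ^ (t (n - t) + m t - m n)`. -/
theorem density_bounds {s m ℓ n t k M q : ℕ} (hs : 1 ≤ s) (hl : 1 ≤ ℓ)
    (hk : 1 ≤ k) (hkM : k ≤ M) (hM : ℓ * M = n * m) (htm : t ≤ m) (htn : t ≤ n) (hq : 2 ≤ q)
    {R S : Type} [CommRing R] [Finite R] [CommRing S] [Finite S] [Algebra R S]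
    (γ : R) (Sbar : Subalgebra R S) (hR : IsChainData s q R γ)
    (hS : IsGaloisExtData m (q ^ m) R S γ) (hB : IsGaloisExtData ℓ (q ^ ℓ) R Sbar γ) :
    let e : ℤ := (t * (n - t) + m * t : ℤ) - m * n + ℓ * (k - 1)
    let π : ℝ := ∏ i ∈ Finset.range k, (1 - ((q : ℝ) ^ ℓ) ^ i / ((q : ℝ) ^ ℓ) ^ M)
    let ρ : ℝ := ∏ i ∈ Finset.range t, (1 - (q : ℝ) ^ i / (q : ℝ) ^ m)
    let δ : ℝ := densityCodes (n := n) s q ℓ Sbar (rankD R) (n * m) k (t + 1)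
    0 ≤ δ ∧ (1 - 2 * n.choose t * (q : ℝ) ^ e) / π ≤ δ ∧
      δ ≤ 1 / ((1 + (q : ℝ) ^ e * ρ) * π) := by
  intro e π ρ δ
  have hq1 : (1 : ℝ) < q := by exact_mod_cast hq
  have hq0 : (0 : ℝ) < q := by linarith
  set Q : ℕ := q ^ ℓ with hQdef
  have hQ2 : 2 ≤ Q := hq.trans (Nat.le_self_pow (by omega) q)
  have hQ1 : (1 : ℝ) < Q := by exact_mod_cast hQ2
  have hQcast : (Q : ℝ) = (q : ℝ) ^ ℓ := by rw [hQdef]; push_cast; rfl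
  have hπ0 : 0 < π := prod_one_sub_pos _ (by rw [← hQcast]; exact hQ1) M k hkM
  have hρ0 : 0 < ρ := prod_one_sub_pos _ hq1 m t htm
  obtain ⟨F, _, πR, hπR, hcF⟩ := hR.exists_reduction hs
  have : Finite F := Finite.of_surjective _ hπR.surj
  have := Fintype.ofFinite F
  -- `Sbar` is itself a finite chain ring with uniformizer the image of `γ`
  obtain ⟨hfree, hfr, hmax, hloc, hres⟩ := hB
  have hntA : Nontrivial Sbar := by
    have : Nontrivial R := ⟨γ ^ (s - 1), 0, hR.2.2.2.1⟩
    exact Module.nontrivial_of_finrank_pos (R := R) (by omega)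
  have hinj : Function.Injective (algebraMap R Sbar) := FaithfulSMul.algebraMap_injective R Sbar
  have hA : IsChainData s Q Sbar (algebraMap R Sbar γ) := by
    refine ⟨hmax, hloc, ?_, ?_, hres⟩
    · rw [← map_pow, hR.2.2.1, map_zero]
    · rw [← map_pow, Ne, map_eq_zero_iff _ hinj]
      exact hR.2.2.2.1
  have hcA := hA.natCard_eq
  obtain ⟨K, _, πA, hπA, hcK⟩ := hA.exists_reduction hs
  have : Finite K := Finite.of_surjective _ hπA.surj
  have := Fintype.ofFinite K
  obtain ⟨hSfree, hSfr, -⟩ := hS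
  have hntR : Nontrivial R := ⟨γ ^ (s - 1), 0, hR.2.2.2.1⟩
  let b := Module.finBasisOfFinrankEq R S hSfr
  have hcS : Nat.card S = (q ^ s) ^ m := by
    rw [Nat.card_congr b.equivFun.toEquiv, Nat.card_fun, Nat.card_fin, hR.natCard_eq]
  have hcV : Nat.card (Fin n → S) = Q ^ (s * M) := by
    rw [Nat.card_fun, Nat.card_fin, hcS, ← pow_mul, ← pow_mul, hQdef, ← pow_mul]
    congr 1
    calc s * (m * n) = s * (n * m) := by ring
      _ = ℓ * (s * M) := by rw [← hM]; ring
  -- fixed lifts of the projective points; good codes become the tuples counted by `good_count`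
  choose σ hσ using hπA.surj
  let lift : Projectivization K (Fin k → K) → Fin k → Sbar := fun P i => σ (P.rep i)
  have hlift : ∀ P i, πA (lift P i) = P.rep i := fun P i => hσ _
  let w : (Fin n → S) → ℕ := fun x => mu R (Submodule.span R (Set.range x))
  have hw0 : w 0 = 0 := by
    have : Submodule.span R (Set.range (0 : Fin n → S)) = ⊥ := by
      rw [Submodule.span_eq_bot]
      rintro _ ⟨i, rfl⟩
      rfl
    simp only [w, this, mu_bot]
  have hw : ∀ (a : Sbar) x, w (a • x) ≤ w x := by
    intro a x
    have h1 : Submodule.span R (Set.range (a • x)) =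
        (Submodule.span R (Set.range x)).map (LinearMap.mulLeft R (a : S)) := by
      rw [Submodule.map_span, ← Set.range_comp]
      rfl
    simp only [w, h1]
    exact mu_map_le _ _
  let B : (Fin n → S) → Prop := fun x => w ((algebraMap R Sbar γ) ^ (s - 1) • x) < t + 1
  have hcount := good_count hπA B lift hlift
  have hcodes := natCard_tuples (A := Sbar) k (fun C : Submodule Sbar (Fin n → S) =>
    ((t + 1 : ℕ) : ℝ) ≤ minDist (rankD R) (C : Set (Fin n → S)))
  have htup : Nat.card {T : Fin k → Fin n → S // LinearIndependent Sbar T ∧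
      ((t + 1 : ℕ) : ℝ) ≤ minDist (rankD R)
        (Submodule.span Sbar (Set.range T) : Set (Fin n → S))} =
      Nat.card {T : Fin k → Fin n → S // ∀ P, ¬ B (∑ i, lift P i • T i)} := by
    refine Nat.card_congr (Equiv.subtypeEquivRight fun T => ?_)
    rw [← good_iff hπA (Nat.le_add_left 1 t) w hw0 hw lift hlift T]
    refine and_congr_right fun hT => ?_
    exact le_minDist_iff _ ⟨T ⟨0, hk⟩, Submodule.subset_span ⟨_, rfl⟩, hT.ne_zero _⟩
  rw [htup] at hcodes
  have hGL := natCard_GL πA hπA.surj hπA.isUnit_iff k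
  have hBcard := natCard_lowRank (n := n) (t := t) hπR b
  have hBeq : Nat.card {x : Fin n → S // B x} = Nat.card {x : Fin n → S //
      mu R (Submodule.span R (Set.range (γ ^ (s - 1) • x))) ≤ t} := by
    refine Nat.card_congr (Equiv.subtypeEquivRight fun x => ?_)
    have : (algebraMap R Sbar γ) ^ (s - 1) • x = γ ^ (s - 1) • x := by
      rw [← map_pow, algebraMap_smul]
    simp only [B, w, this, Nat.lt_succ_iff]
  rw [← hBeq] at hBcard
  have hlow := lowRank_card_lower (F := F) htm htn
  have hup := lowRank_card_upper (F := F) (m := m) htn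
  have hN := Projectivization.card' K (Fin k → K)
  rw [Nat.card_fun, Nat.card_fin, hcK] at hN
  rw [← Nat.card_eq_fintype_card, hcF] at hlow hup
  rw [hcF] at hBcard
  rw [hcK, hcA] at hGL
  simp only [hcV] at hcount hBcard
  set G := Nat.card {T : Fin k → Fin n → S // ∀ P, ¬ B (∑ i, lift P i • T i)} with hGdef
  set N := Nat.card (Projectivization K (Fin k → K)) with hNdef
  set β := Nat.card {x : Fin n → Fin m → F //
    Module.finrank F (Submodule.span F (Set.range x)) ≤ t} with hβdef
  set b' := Nat.card {x : Fin n → S // B x} with hb'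
  set gl := Nat.card (GL (Fin k) Sbar) with hgl
  have hδ : δ = (Nat.card {C : Submodule Sbar (Fin n → S) // Module.Free Sbar C ∧
      mu Sbar C = k ∧ ((t + 1 : ℕ) : ℝ) ≤ minDist (rankD R) (C : Set (Fin n → S))} : ℝ) /
        NN s Q (M : ℤ) (k : ℤ) := by
    have : n * m / ℓ = M := by rw [← hM]; exact Nat.mul_div_cancel_left _ (by omega)
    simp only [δ, densityCodes, numCodes, this, hQdef]
  set c := Nat.card {C : Submodule Sbar (Fin n → S) // Module.Free Sbar C ∧
      mu Sbar C = k ∧ ((t + 1 : ℕ) : ℝ) ≤ minDist (rankD R) (C : Set (Fin n → S))} with hc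
  clear_value G N β b' gl c
  have hNN := NN_mul_eq s Q M k hs hQ2 hkM
  set V : ℝ := ((Q : ℝ) ^ (s * M)) ^ k with hV
  have hV0 : 0 < V := by positivity
  have hgl_real : (gl : ℝ) = (∏ i ∈ Finset.range k, ((Q : ℝ) ^ k - (Q : ℝ) ^ i)) *
      (Q : ℝ) ^ ((s - 1) * (k * k)) := by
    have h1 : ((∏ i : Fin k, (Q ^ k - Q ^ (i : ℕ)) : ℕ) : ℝ) =
        ∏ i ∈ Finset.range k, ((Q : ℝ) ^ k - (Q : ℝ) ^ i) := by
      rw [Finset.prod_range, Nat.cast_prod]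
      refine Finset.prod_congr rfl fun i _ => ?_
      rw [Nat.cast_sub (Nat.pow_le_pow_right (by omega) i.2.le)]
      push_cast; rfl
    have h2 : (gl : ℝ) * (Q : ℝ) ^ (k * k) =
        ((∏ i : Fin k, (Q ^ k - Q ^ (i : ℕ)) : ℕ) : ℝ) * ((Q : ℝ) ^ s) ^ (k * k) := by
      exact_mod_cast hGL
    rw [h1] at h2
    have h3 : (0 : ℝ) < (Q : ℝ) ^ (k * k) := by positivity
    have h4 : ((Q : ℝ) ^ s) ^ (k * k) = (Q : ℝ) ^ ((s - 1) * (k * k)) * Q ^ (k * k) := by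
      rw [← pow_mul, ← pow_add]
      congr 1
      obtain ⟨s, rfl⟩ := Nat.exists_eq_add_of_le' hs
      rw [Nat.add_sub_cancel]
      ring
    rw [h4, ← mul_assoc] at h2
    exact mul_right_cancel₀ h3.ne' h2
  have hNNgl : NN s Q (M : ℤ) (k : ℤ) * gl = V * π := by
    rw [hgl_real, ← mul_assoc, hNN, hQcast]
  have hδG : δ = G / (V * π) := by
    have h1 : (G : ℝ) = c * gl := by exact_mod_cast hcodes
    have h2 : NN s Q (M : ℤ) (k : ℤ) * gl ≠ 0 := by rw [hNNgl]; positivity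
    have h3 := left_ne_zero_of_mul h2
    have h4 := right_ne_zero_of_mul h2
    rw [hδ, ← hNNgl, h1, mul_div_mul_right _ _ h4]
  -- bounds on the expected number of bad projective points
  have hp : (b' : ℝ) / ((Q : ℝ) ^ (s * M)) = β / (q : ℝ) ^ (m * n) := by
    have h1 : (b' : ℝ) * (q : ℝ) ^ (m * n) = β * (Q : ℝ) ^ (s * M) := by exact_mod_cast hBcard
    rw [div_eq_div_iff (by positivity) (by positivity), h1]
  push_cast at hcount
  rw [hp] at hcount
  set E : ℝ := (N : ℝ) * (β / (q : ℝ) ^ (m * n)) with hE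
  obtain ⟨k, rfl⟩ := Nat.exists_eq_add_of_le' hk
  have hNr : (Q : ℝ) ^ (k + 1) = N * (Q - 1) + 1 := by
    have h1 : (Q : ℝ) ^ (k + 1) = N * ((Q - 1 : ℕ) : ℝ) + 1 := by exact_mod_cast hN
    rw [h1, Nat.cast_sub (by omega)]
    simp
  have hQk : (1 : ℝ) ≤ (Q : ℝ) ^ k := one_le_pow₀ hQ1.le
  have hQ2' : (2 : ℝ) ≤ Q := by exact_mod_cast hQ2
  have hNlow : (Q : ℝ) ^ k ≤ N := by
    have : (Q : ℝ) ^ k * (Q - 1) ≤ N * (Q - 1) := by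
      have := pow_succ (Q : ℝ) k
      linarith
    exact le_of_mul_le_mul_right this (by linarith)
  have hNup : (N : ℝ) ≤ 2 * (Q : ℝ) ^ k := by
    have : (N : ℝ) * (Q - 1) ≤ 2 * (Q : ℝ) ^ k * (Q - 1) := by
      have := pow_succ (Q : ℝ) k
      nlinarith
    exact le_of_mul_le_mul_right this (by linarith)
  have hβlow : (q : ℝ) ^ (t * (n - t) + m * t) * ρ ≤ β := by
    have h1 : ((q ^ (t * (n - t)) * ∏ i : Fin t, (q ^ m - q ^ (i : ℕ)) : ℕ) : ℝ) ≤ β := by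
      exact_mod_cast hlow
    refine le_trans (le_of_eq ?_) h1
    rw [Nat.cast_mul, Nat.cast_prod, pow_add, mul_assoc, pow_mul (q : ℝ) m t]
    push_cast
    congr 1
    have h2 : ((q : ℝ) ^ m) ^ t = ∏ i ∈ Finset.range t, (q : ℝ) ^ m := by simp
    rw [h2, ← Finset.prod_mul_distrib, Finset.prod_range]
    refine Finset.prod_congr rfl fun i _ => ?_
    rw [Nat.cast_sub (Nat.pow_le_pow_right (by omega) (i.2.le.trans htm))]
    push_cast
    field_simp
  have hβup : (β : ℝ) ≤ n.choose t * (q : ℝ) ^ (t * (n - t) + m * t) := by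
    have : t * m + (n - t) * t = t * (n - t) + m * t := by ring
    rw [this] at hup
    exact_mod_cast hup
  have he : (q : ℝ) ^ e = (Q : ℝ) ^ k * ((q : ℝ) ^ (t * (n - t) + m * t) / (q : ℝ) ^ (m * n)) := by
    rw [hQcast, ← pow_mul, ← zpow_natCast, ← zpow_natCast, ← zpow_natCast, ← zpow_sub₀ hq0.ne',
      ← zpow_add₀ hq0.ne']
    congr 1
    simp only [e]
    push_cast [Nat.cast_sub htn]
    ring
  have hElow : (q : ℝ) ^ e * ρ ≤ E := by
    rw [he, hE, mul_assoc, div_mul_eq_mul_div]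
    gcongr
  have hEup : E ≤ 2 * n.choose t * (q : ℝ) ^ e := by
    calc E ≤ (2 * (Q : ℝ) ^ k) * ((n.choose t * (q : ℝ) ^ (t * (n - t) + m * t)) /
          (q : ℝ) ^ (m * n)) := by rw [hE]; gcongr
      _ = 2 * n.choose t * (q : ℝ) ^ e := by rw [he]; ring
  obtain ⟨hc1, hc2⟩ := hcount
  have hqe : 0 < (q : ℝ) ^ e := by positivity
  refine ⟨by rw [hδG]; positivity, ?_, ?_⟩
  · rw [hδG, div_le_div_iff₀ hπ0 (by positivity)]
    have h1 : (1 - 2 * n.choose t * (q : ℝ) ^ e) * V ≤ G :=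
      le_trans (mul_le_mul_of_nonneg_right (by linarith) hV0.le) hc1
    calc (1 - 2 * n.choose t * (q : ℝ) ^ e) * (V * π)
        = (1 - 2 * n.choose t * (q : ℝ) ^ e) * V * π := by ring
      _ ≤ G * π := mul_le_mul_of_nonneg_right h1 hπ0.le
  · have h0 : 0 < (1 + (q : ℝ) ^ e * ρ) * π := by positivity
    rw [hδG, div_le_div_iff₀ (by positivity) h0]
    have h1 : G * (1 + (q : ℝ) ^ e * ρ) ≤ V :=
      le_trans (mul_le_mul_of_nonneg_left (by linarith) (Nat.cast_nonneg G)) hc2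
    calc (G : ℝ) * ((1 + (q : ℝ) ^ e * ρ) * π) = G * (1 + (q : ℝ) ^ e * ρ) * π := by ring
      _ ≤ V * π := mul_le_mul_of_nonneg_right h1 hπ0.le
      _ = 1 * (V * π) := by ring

/-! ### Passage to the limit -/

theorem tendsto_prod_one_sub (ℓ M k : ℕ) (hl : 1 ≤ ℓ) (hk : k ≤ M) :
    Tendsto (fun q : ℕ => ∏ i ∈ Finset.range k, (1 - ((q : ℝ) ^ ℓ) ^ i / ((q : ℝ) ^ ℓ) ^ M))
      atTop (𝓝 1) := by
  have hQ : Tendsto (fun q : ℕ => (q : ℝ) ^ ℓ) atTop atTop :=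
    (tendsto_pow_atTop (by omega)).comp tendsto_natCast_atTop_atTop
  have h : Tendsto (fun q : ℕ => ∏ i ∈ Finset.range k,
      (1 - ((q : ℝ) ^ ℓ) ^ i / ((q : ℝ) ^ ℓ) ^ M)) atTop
      (𝓝 (∏ i ∈ Finset.range k, (1 - 0))) := by
    refine tendsto_finsetProd _ fun i hi => ?_
    have hi : i < M := (Finset.mem_range.1 hi).trans_le hk
    exact tendsto_const_nhds.sub ((tendsto_pow_div_pow_atTop_zero hi).comp hQ)
  simpa using h

theorem neBot_primePow : (atTop ⊓ 𝓟 {q : ℕ | IsPrimePow q}).NeBot := by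
  rw [inf_principal_neBot_iff]
  intro U hU
  obtain ⟨a, ha⟩ := mem_atTop_sets.1 hU
  obtain ⟨p, hp, hpp⟩ := Nat.exists_infinite_primes a
  exact ⟨p, ha p hp, hpp.isPrimePow⟩

/-- Limits of a density squeezed between `(1 - C q ^ e) / π` and `1 / ((1 + q ^ e ρ) π)`, according to
the sign of `e`. -/
theorem limit_cases {l : Filter ℕ} [l.NeBot] (hl : l ≤ atTop) (C : ℝ) (e : ℤ) (π ρ δ : ℕ → ℝ)
    (hπ : Tendsto π atTop (𝓝 1)) (hρ : Tendsto ρ atTop (𝓝 1))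
    (hδ : ∀ᶠ q : ℕ in l, 0 ≤ δ q ∧ (1 - C * (q : ℝ) ^ e) / π q ≤ δ q ∧
      δ q ≤ 1 / ((1 + (q : ℝ) ^ e * ρ q) * π q)) :
    (e < 0 → Tendsto δ l (𝓝 1)) ∧ (0 < e → Tendsto δ l (𝓝 0)) ∧
      (e = 0 → limsup δ l ≤ 1 / 2) := by
  have hπ' := hπ.mono_left hl
  have hρ' := hρ.mono_left hl
  have hcast : Tendsto (fun q : ℕ => (q : ℝ)) l atTop := tendsto_natCast_atTop_atTop.mono_left hl
  refine ⟨fun he => ?_, fun he => ?_, fun he => ?_⟩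
  · have hz : Tendsto (fun q : ℕ => (q : ℝ) ^ e) l (𝓝 0) := (tendsto_zpow_atTop_zero he).comp hcast
    have hlow : Tendsto (fun q : ℕ => (1 - C * (q : ℝ) ^ e) / π q) l (𝓝 1) := by
      have h : Tendsto (fun q : ℕ => (1 - C * (q : ℝ) ^ e) / π q) l (𝓝 ((1 - C * 0) / 1)) :=
        ((hz.const_mul C).const_sub 1).div hπ' one_ne_zero
      rwa [mul_zero, sub_zero, div_one] at h
    have hup : Tendsto (fun q : ℕ => 1 / ((1 + (q : ℝ) ^ e * ρ q) * π q)) l (𝓝 1) := by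
      have h : Tendsto (fun q : ℕ => 1 / ((1 + (q : ℝ) ^ e * ρ q) * π q)) l
          (𝓝 (1 / ((1 + 0 * 1) * 1))) :=
        tendsto_const_nhds.div (((hz.mul hρ').const_add 1).mul hπ') (by norm_num)
      rwa [zero_mul, add_zero, mul_one, div_one] at h
    exact tendsto_of_tendsto_of_tendsto_of_le_of_le' hlow hup (hδ.mono fun _ h => h.2.1)
      (hδ.mono fun _ h => h.2.2)
  · obtain ⟨a, rfl⟩ := Int.eq_ofNat_of_zero_le he.le
    have ha : a ≠ 0 := by rintro rfl; simp at he
    have hinf : Tendsto (fun q : ℕ => (q : ℝ) ^ (a : ℤ)) l atTop := by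
      simp only [zpow_natCast]
      exact (tendsto_pow_atTop ha).comp hcast
    have hup : Tendsto (fun q : ℕ => 1 / ((1 + (q : ℝ) ^ (a : ℤ) * ρ q) * π q)) l (𝓝 0) := by
      simp only [one_div]
      exact ((tendsto_atTop_add_const_left _ 1 (hinf.atTop_mul_pos one_pos hρ')).atTop_mul_pos
        one_pos hπ').inv_tendsto_atTop
    exact tendsto_of_tendsto_of_tendsto_of_le_of_le' tendsto_const_nhds hup
      (hδ.mono fun _ h => h.1) (hδ.mono fun _ h => h.2.2)
  · subst he
    simp only [zpow_zero, mul_one, one_mul] at hδ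
    have hup : Tendsto (fun q : ℕ => 1 / ((1 + ρ q) * π q)) l (𝓝 (1 / 2)) := by
      have h : Tendsto (fun q : ℕ => 1 / ((1 + ρ q) * π q)) l (𝓝 (1 / ((1 + 1) * 1))) :=
        tendsto_const_nhds.div ((hρ'.const_add 1).mul hπ') (by norm_num)
      rwa [mul_one, one_add_one_eq_two] at h
    rw [← hup.limsup_eq]
    exact limsup_le_limsup (hδ.mono fun _ h => h.2.2)
      (isCoboundedUnder_le_of_eventually_le l (hδ.mono fun _ h => h.1)) hup.isBoundedUnder_le

/-! ### The trichotomy -/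

theorem stmt18 (s m ℓ n d : ℕ) (hs : 1 ≤ s) (hm : 1 ≤ m) (hl : 1 ≤ ℓ) (hlm : ℓ ∣ m)
    (hmn : m < n) (hd : 2 ≤ d) (hdm : d ≤ m)
    (R S : ℕ → Type) [∀ q, CommRing (R q)] [∀ q, Fintype (R q)]
    [∀ q, CommRing (S q)] [∀ q, Fintype (S q)] [∀ q, Algebra (R q) (S q)]
    (γ : ∀ q, R q) (Sbar : ∀ q, Subalgebra (R q) (S q))
    (hfam : ∀ q, IsPrimePow q →
      IsChainData s q (R q) (γ q) ∧ IsGaloisExtData m (q ^ m) (R q) (S q) (γ q) ∧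
        IsGaloisExtData ℓ (q ^ ℓ) (R q) (↥(Sbar q)) (γ q))
    :
    ((((d - 1) * (m - d + 1) : ℕ) : ℤ) - ((ℓ : ℤ) * ⌈((n * (d - 1) : ℕ) : ℚ) / ((ℓ : ℕ) : ℚ)⌉ - ((n * (d - 1) : ℕ) : ℤ)) < (ℓ : ℤ) →
      Tendsto (fun q : ℕ => densityCodes (n := n) s q ℓ (Sbar q) (rankD (R q)) (n * m) (n * (m - d + 1) / ℓ) d) (atTop ⊓ 𝓟 {q : ℕ | IsPrimePow q}) (𝓝 1)) ∧
    ((ℓ : ℤ) < (((d - 1) * (m - d + 1) : ℕ) : ℤ) - ((ℓ : ℤ) * ⌈((n * (d - 1) : ℕ) : ℚ) / ((ℓ : ℕ) : ℚ)⌉ - ((n * (d - 1) : ℕ) : ℤ)) →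
      Tendsto (fun q : ℕ => densityCodes (n := n) s q ℓ (Sbar q) (rankD (R q)) (n * m) (n * (m - d + 1) / ℓ) d) (atTop ⊓ 𝓟 {q : ℕ | IsPrimePow q}) (𝓝 0)) ∧
    ((ℓ : ℤ) = (((d - 1) * (m - d + 1) : ℕ) : ℤ) - ((ℓ : ℤ) * ⌈((n * (d - 1) : ℕ) : ℚ) / ((ℓ : ℕ) : ℚ)⌉ - ((n * (d - 1) : ℕ) : ℤ)) →
      limsup (fun q : ℕ => densityCodes (n := n) s q ℓ (Sbar q) (rankD (R q)) (n * m) (n * (m - d + 1) / ℓ) d) (atTop ⊓ 𝓟 {q : ℕ | IsPrimePow q}) ≤ 1 / 2) := by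
  obtain ⟨t, rfl⟩ : ∃ t, d = t + 1 := Nat.exists_eq_add_of_le' (by omega)
  obtain ⟨m', rfl⟩ := hlm
  have hmt : ℓ * m' - (t + 1) + 1 = ℓ * m' - t := by omega
  rw [hmt, Nat.add_sub_cancel]
  set k := n * (ℓ * m' - t) / ℓ with hk
  set M := n * m' with hM
  set c : ℤ := ⌈((n * t : ℕ) : ℚ) / ((ℓ : ℕ) : ℚ)⌉ with hc
  have hl0 : (0 : ℚ) < ℓ := by exact_mod_cast hl
  have hc1 : ((n * t : ℕ) : ℤ) ≤ ℓ * c := by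
    have h : ((n * t : ℕ) : ℚ) / ℓ ≤ c := Int.le_ceil _
    rw [div_le_iff₀ hl0] at h
    have : ((n * t : ℕ) : ℤ) ≤ c * ℓ := by exact_mod_cast h
    linarith
  have hc2 : (ℓ : ℤ) * c < (n * t : ℕ) + ℓ := by
    have h : (c : ℚ) < ((n * t : ℕ) : ℚ) / ℓ + 1 := Int.ceil_lt_add_one _
    rw [← sub_lt_iff_lt_add, lt_div_iff₀ hl0] at h
    have : (c - 1) * ℓ < ((n * t : ℕ) : ℤ) := by exact_mod_cast h
    linarith
  have htm : t ≤ ℓ * m' := by omega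
  have hk1 : (ℓ : ℤ) * k ≤ n * (ℓ * m' - t) := by
    have h : ℓ * k ≤ n * (ℓ * m' - t) := Nat.mul_div_le _ _
    have h' : ((ℓ * k : ℕ) : ℤ) ≤ ((n * (ℓ * m' - t) : ℕ) : ℤ) := by exact_mod_cast h
    push_cast [Nat.cast_sub htm] at h'
    exact h'
  have hk2 : (n : ℤ) * (ℓ * m' - t) < ℓ * k + ℓ := by
    have h : n * (ℓ * m' - t) < ℓ * (k + 1) := Nat.lt_mul_div_succ _ hl
    have h' : ((n * (ℓ * m' - t) : ℕ) : ℤ) < ((ℓ * (k + 1) : ℕ) : ℤ) := by exact_mod_cast h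
    push_cast [Nat.cast_sub htm] at h'
    linarith
  -- the codimension `M - k` is the ceiling of `n t / ℓ`
  have hkc : (k : ℤ) + c = M := by
    have hl' : (0 : ℤ) < ℓ := by exact_mod_cast hl
    push_cast at hc1 hc2
    have h1 : (ℓ : ℤ) * (k + c) < ℓ * (M + 1) := by rw [hM]; push_cast; linarith
    have h2 : (ℓ : ℤ) * M < ℓ * (k + c + 1) := by rw [hM]; push_cast; linarith
    have h1' := lt_of_mul_lt_mul_left h1 hl'.le
    have h2' := lt_of_mul_lt_mul_left h2 hl'.le
    omega
  have hc0 : 0 ≤ c := by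
    rw [hc]; positivity
  have hkM : k ≤ M := by omega
  have hkpos : 1 ≤ k := by
    rw [hk, Nat.one_le_div_iff hl]
    have h1 : 1 ≤ m' := Nat.pos_of_ne_zero (by rintro rfl; simp at hm)
    have h2 : ℓ ≤ ℓ * m' := Nat.le_mul_of_pos_right _ h1
    have h3 : 1 ≤ ℓ * m' - t := by omega
    calc ℓ ≤ n * 1 := by omega
      _ ≤ _ := Nat.mul_le_mul_left _ h3
  have hne := neBot_primePow
  have hexp : ((t * (n - t) + (ℓ * m' : ℕ) * t : ℤ) - (ℓ * m' : ℕ) * n + ℓ * (k - 1)) =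
      ((t * (ℓ * m' - t) : ℕ) : ℤ) - (ℓ * c - (n * t : ℕ)) - ℓ := by
    have : (k : ℤ) = M - c := by omega
    rw [this, hM]
    push_cast [Nat.cast_sub htm]
    ring
  have hlim := limit_cases (l := atTop ⊓ 𝓟 {q : ℕ | IsPrimePow q}) inf_le_left
    (2 * n.choose t) _ _ _
    (fun q : ℕ => densityCodes (n := n) s q ℓ (Sbar q) (rankD (R q)) (n * (ℓ * m')) k (t + 1))
    (tendsto_prod_one_sub ℓ M k hl hkM)
    (by simpa using tendsto_prod_one_sub 1 (ℓ * m') t le_rfl htm)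
    (by
      filter_upwards [mem_inf_of_right (mem_principal_self _)] with q hq
      obtain ⟨hR, hS, hB⟩ := hfam q hq
      exact density_bounds hs hl hkpos hkM (by rw [hM]; ring) htm (by omega) hq.two_le
        (γ q) (Sbar q) hR hS hB)
  rw [hexp] at hlim
  exact ⟨fun h => hlim.1 (by linarith), fun h => hlim.2.1 (by linarith),
    fun h => hlim.2.2 (by linarith)⟩
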